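/- arXiv:2312.10252 — 13 statements merged into one kernel-verified Lean document; each statement's English description precedes it below -/
import Mathlib

section
/- Let α < β be real numbers and let ψ, φ : [α,β] → ℝ be integrable functions with φ(υ) > 0 for all υ ∈ [α,β]. If the ratio υ ↦ ψ(υ)/φ(υ) is increasing on [α,β], then the function s ↦ (∫_α^s ψ(υ) dυ) / (∫_α^s φ(υ) dυ) is increasing on (α,β], i.e. for all α < s₁ ≤ s₂ ≤ β one has (∫_α^{s₁} ψ)/(∫_α^{s₁} φ) ≤ (∫_α^{s₂} ψ)/(∫_α^{s₂} φ). -/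
open MeasureTheory Set intervalIntegral

/-!
Integrating `ψ x * φ y ≤ ψ y * φ x`, valid for `x ≤ s₁ ≤ y`, over `x ∈ (α, s₁]` and `y ∈ (s₁, s₂]`
gives `(∫_α^{s₁} ψ) (∫_{s₁}^{s₂} φ) ≤ (∫_{s₁}^{s₂} ψ) (∫_α^{s₁} φ)`. Adding
`(∫_α^{s₁} ψ) (∫_α^{s₁} φ)` to both sides turns this into the cross-multiplied claim.
-/

theorem integral_mul_integral_le_of_ae_mul_le {X Y : Type*} [MeasurableSpace X]
    [MeasurableSpace Y] {μ : Measure X} {ν : Measure Y} {f g : X → ℝ} {f' g' : Y → ℝ}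
    (hf : Integrable f μ) (hg : Integrable g μ) (hf' : Integrable f' ν) (hg' : Integrable g' ν)
    (h : ∀ᵐ x ∂μ, ∀ᵐ y ∂ν, f x * g' y ≤ f' y * g x) :
    (∫ x, f x ∂μ) * ∫ y, g' y ∂ν ≤ (∫ y, f' y ∂ν) * ∫ x, g x ∂μ := by
  have h_inner : ∀ᵐ x ∂μ, f x * ∫ y, g' y ∂ν ≤ (∫ y, f' y ∂ν) * g x := by
    filter_upwards [h] with x hx
    rw [← MeasureTheory.integral_const_mul, ← MeasureTheory.integral_mul_const]
    exact integral_mono_ae (hg'.const_mul _) (hf'.mul_const _) hx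
  rw [← MeasureTheory.integral_mul_const, ← MeasureTheory.integral_const_mul]
  exact integral_mono_ae (hf.mul_const _) (hg.const_mul _) h_inner

theorem setIntegral_div_setIntegral_le_of_subset {X : Type*} [MeasurableSpace X]
    {μ : Measure X} {f g : X → ℝ} {s t : Set X} (hs : MeasurableSet s) (ht : MeasurableSet t)
    (hst : s ⊆ t) (hf : IntegrableOn f t μ) (hg : IntegrableOn g t μ)
    (hgs : 0 < ∫ x in s, g x ∂μ) (hgt : 0 < ∫ x in t, g x ∂μ)
    (h : ∀ x ∈ s, ∀ y ∈ t \ s, f x * g y ≤ f y * g x) :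
    (∫ x in s, f x ∂μ) / (∫ x in s, g x ∂μ) ≤ (∫ x in t, f x ∂μ) / ∫ x in t, g x ∂μ := by
  have h_cross : (∫ x in s, f x ∂μ) * ∫ y in t \ s, g y ∂μ ≤
      (∫ y in t \ s, f y ∂μ) * ∫ x in s, g x ∂μ :=
    integral_mul_integral_le_of_ae_mul_le (hf.mono_set hst) (hg.mono_set hst)
      (hf.mono_set sdiff_subset) (hg.mono_set sdiff_subset)
      (ae_restrict_of_forall_mem hs fun x hx ↦
        ae_restrict_of_forall_mem (ht.diff hs) (h x hx))
  rw [setIntegral_sdiff hs hf hst, setIntegral_sdiff hs hg hst] at h_cross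
  rw [div_le_div_iff₀ hgs hgt]
  linarith

theorem setIntegral_pos_of_forall_mem_pos {X : Type*} [MeasurableSpace X] {μ : Measure X}
    {f : X → ℝ} {s : Set X} (hs : MeasurableSet s) (hμs : 0 < μ s) (hf : IntegrableOn f s μ)
    (hpos : ∀ x ∈ s, 0 < f x) : 0 < ∫ x in s, f x ∂μ := by
  have hsupp : Function.support f ∩ s = s := inter_eq_right.2 fun x hx ↦ (hpos x hx).ne'
  rwa [setIntegral_pos_iff_support_of_nonneg_ae
    (ae_restrict_of_forall_mem hs fun x hx ↦ (hpos x hx).le) hf, hsupp]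

theorem quotient_integral_variable_upper_limit_monotone_general {μ : Measure ℝ} {α β : ℝ}
    {ψ φ : ℝ → ℝ} (hμ : ∀ s ∈ Ioc α β, 0 < μ (Ioc α s))
    (hψ : IntegrableOn ψ (Ioc α β) μ) (hφ : IntegrableOn φ (Ioc α β) μ)
    (hφpos : ∀ υ ∈ Ioc α β, 0 < φ υ)
    (hratio : MonotoneOn (fun υ ↦ ψ υ / φ υ) (Ioc α β)) :
    MonotoneOn (fun s ↦ (∫ υ in α..s, ψ υ ∂μ) / ∫ υ in α..s, φ υ ∂μ) (Ioc α β) := by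
  intro s₁ hs₁ s₂ hs₂ hle
  have hsub {s : ℝ} (hs : s ∈ Ioc α β) : Ioc α s ⊆ Ioc α β := Ioc_subset_Ioc_right hs.2
  have hφint {s : ℝ} (hs : s ∈ Ioc α β) : 0 < ∫ υ in Ioc α s, φ υ ∂μ :=
    setIntegral_pos_of_forall_mem_pos measurableSet_Ioc (hμ s hs) (hφ.mono_set (hsub hs))
      fun υ hυ ↦ hφpos υ (hsub hs hυ)
  have h_cross : ∀ x ∈ Ioc α s₁, ∀ y ∈ Ioc α s₂ \ Ioc α s₁, ψ x * φ y ≤ ψ y * φ x := by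
    intro x hx y ⟨hy, hy'⟩
    have hxy : x ≤ y := hx.2.trans (not_le.1 fun hys ↦ hy' ⟨hy.1, hys⟩).le
    have hxβ := hsub hs₁ hx
    have hyβ := hsub hs₂ hy
    exact (div_le_div_iff₀ (hφpos x hxβ) (hφpos y hyβ)).1 (hratio hxβ hyβ hxy)
  simp only [integral_of_le hs₁.1.le, integral_of_le hs₂.1.le]
  exact setIntegral_div_setIntegral_le_of_subset measurableSet_Ioc measurableSet_Ioc
    (Ioc_subset_Ioc_right hle) (hψ.mono_set (hsub hs₂)) (hφ.mono_set (hsub hs₂))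
    (hφint hs₁) (hφint hs₂) h_cross

theorem quotient_integral_variable_upper_limit_monotone
    (α β : ℝ) (hαβ : α < β) (ψ φ : ℝ → ℝ)
    (hψ : IntervalIntegrable ψ volume α β)
    (hφ : IntervalIntegrable φ volume α β)
    (hφpos : ∀ υ ∈ Icc α β, 0 < φ υ)
    (hratio : MonotoneOn (fun υ => ψ υ / φ υ) (Icc α β)) :
    ∀ s₁ s₂ : ℝ, α < s₁ → s₁ ≤ s₂ → s₂ ≤ β →
      (∫ υ in α..s₁, ψ υ) / (∫ υ in α..s₁, φ υ) ≤
        (∫ υ in α..s₂, ψ υ) / (∫ υ in α..s₂, φ υ) :=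
  fun _ _ h₁ h₁₂ h₂ ↦ quotient_integral_variable_upper_limit_monotone_general
    (fun s hs ↦ by simpa using hs.1) hψ.1 hφ.1 (fun υ hυ ↦ hφpos υ (Ioc_subset_Icc_self hυ))
    (hratio.mono Ioc_subset_Icc_self) ⟨h₁, h₁₂.trans h₂⟩ ⟨h₁.trans_le h₁₂, h₂⟩ h₁₂
end

section
/- Let a ∈ ℕ and let ψ, φ : ℕ → ℝ be sequences with φ(k) > 0 for all k. If the ratio k ↦ ψ(k)/φ(k) is increasing on ℕ, then the function n ↦ (∑_{k=a}^{n-1} ψ(k)) / (∑_{k=a}^{n-1} φ(k)) is increasing for integers n ≥ a+1, i.e. for all a+1 ≤ n₁ ≤ n₂ one has (∑_{k=a}^{n₁-1} ψ(k))/(∑_{k=a}^{n₁-1} φ(k)) ≤ (∑_{k=a}^{n₂-1} ψ(k))/(∑_{k=a}^{n₂-1} φ(k)). -/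
/-!
Passing from `Ico a n₁` to `Ico a n₂` adds only indices lying above all the old ones, whose ratios
`ψ k / φ k` therefore dominate every old ratio. Cross-multiplied and summed over all pairs (old
index, new index), this says that the added block has the larger quotient of sums, so adjoining it
can only raise the mediant.
-/

section QuotientOfSums

variable {ι K : Type*} [Field K] [LinearOrder K] [IsStrictOrderedRing K]

lemma div_le_add_div_add_iff_mul_le_mul {p q r s : K} (hq : 0 < q) (hqs : 0 < q + s) :
    p / q ≤ (p + r) / (q + s) ↔ p * s ≤ r * q := by
  rw [div_le_div_iff₀ hq hqs, mul_add, add_mul, add_le_add_iff_left]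

lemma sum_mul_sum_le_sum_mul_sum_of_div_le_div {κ : Type*} {s : Finset ι} {t : Finset κ}
    {f g : ι → K} {u v : κ → K} (hg : ∀ i ∈ s, 0 < g i) (hv : ∀ j ∈ t, 0 < v j)
    (h : ∀ i ∈ s, ∀ j ∈ t, f i / g i ≤ u j / v j) :
    (∑ i ∈ s, f i) * ∑ j ∈ t, v j ≤ (∑ j ∈ t, u j) * ∑ i ∈ s, g i := by
  rw [Finset.sum_mul_sum, Finset.sum_mul_sum, Finset.sum_comm (s := t)]
  exact Finset.sum_le_sum fun i hi => Finset.sum_le_sum fun j hj =>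
    (div_le_div_iff₀ (hg i hi) (hv j hj)).1 (h i hi j hj)

lemma sum_div_sum_le_sum_div_sum_of_subset {s t : Finset ι} {ψ φ : ι → K} (hst : s ⊆ t)
    (hs : s.Nonempty) (hφ : ∀ i ∈ t, 0 < φ i)
    (h : ∀ i ∈ s, ∀ j ∈ t, j ∉ s → ψ i / φ i ≤ ψ j / φ j) :
    (∑ i ∈ s, ψ i) / ∑ i ∈ s, φ i ≤ (∑ i ∈ t, ψ i) / ∑ i ∈ t, φ i := by
  classical
  have split (f : ι → K) : ∑ i ∈ t, f i = ∑ i ∈ s, f i + ∑ i ∈ t \ s, f i := by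
    rw [add_comm, Finset.sum_sdiff hst]
  have hφs : 0 < ∑ i ∈ s, φ i := Finset.sum_pos (fun i hi => hφ i (hst hi)) hs
  have hφt : 0 < ∑ i ∈ t, φ i := Finset.sum_pos hφ (hs.mono hst)
  rw [split φ] at hφt
  rw [split ψ, split φ, div_le_add_div_add_iff_mul_le_mul hφs hφt]
  refine sum_mul_sum_le_sum_mul_sum_of_div_le_div (fun i hi => hφ i (hst hi))
    (fun j hj => hφ j (Finset.sdiff_subset hj)) fun i hi j hj => ?_
  obtain ⟨hjt, hjs⟩ := Finset.mem_sdiff.1 hj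
  exact h i hi j hjt hjs

theorem quotient_sum_variable_upper_limit_monotone_general [LinearOrder ι] [LocallyFiniteOrder ι]
    {a : ι} {ψ φ : ι → K} (hφ : ∀ k, a ≤ k → 0 < φ k)
    (hratio : MonotoneOn (fun k => ψ k / φ k) (Set.Ici a)) :
    MonotoneOn (fun n => (∑ k ∈ Finset.Ico a n, ψ k) / ∑ k ∈ Finset.Ico a n, φ k)
      (Set.Ioi a) := by
  intro n₁ hn₁ n₂ _ hn
  refine sum_div_sum_le_sum_div_sum_of_subset (Finset.Ico_subset_Ico_right hn)
    (Finset.nonempty_Ico.2 hn₁) (fun k hk => hφ k (Finset.mem_Ico.1 hk).1) fun i hi j hj hj' => ?_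
  obtain ⟨hai, hin₁⟩ := Finset.mem_Ico.1 hi
  have haj : a ≤ j := (Finset.mem_Ico.1 hj).1
  have hn₁j : n₁ ≤ j := not_lt.1 fun hjn₁ => hj' (Finset.mem_Ico.2 ⟨haj, hjn₁⟩)
  exact hratio hai haj (hin₁.le.trans hn₁j)

end QuotientOfSums

theorem quotient_sum_variable_upper_limit_monotone
    (a : ℕ) (ψ φ : ℕ → ℝ) (hφpos : ∀ k, 0 < φ k)
    (hratio : Monotone fun k => ψ k / φ k) :
    ∀ n₁ n₂ : ℕ, a + 1 ≤ n₁ → n₁ ≤ n₂ →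
      (∑ k ∈ Finset.Ico a n₁, ψ k) / (∑ k ∈ Finset.Ico a n₁, φ k) ≤
        (∑ k ∈ Finset.Ico a n₂, ψ k) / (∑ k ∈ Finset.Ico a n₂, φ k) :=
  fun _ _ h₁ h₂ => quotient_sum_variable_upper_limit_monotone_general (fun k _ => hφpos k)
    (hratio.monotoneOn _) h₁ (h₁.trans h₂) h₂
end

section
/- Let α < β be real numbers, let ψ, φ : [α,β] → ℝ be continuous functions with φ(υ) > 0 for all υ ∈ [α,β], such that υ ↦ ψ(υ)/φ(υ) is increasing on [α,β] and ψ(α)/φ(α) ≥ 1. Let T : [α,β] → [0,∞) be differentiable and decreasing. Then the function s ↦ (T(s) + ∫_α^s ψ(υ) dυ) / (T(s) + ∫_α^s φ(υ) dυ) is increasing on (α,β] (and on [α,β] whenever the denominator is positive at α). -/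
/-!
`(T s + ∫ r φ) / (T s + ∫ φ)` with `r = ψ / φ` is the weighted mean of the value `1`, with weight
`T s`, and of the values `r υ` for `α ≤ υ ≤ s`, with weights `φ υ`. All these values lie between `1`
and `r s`, hence so does the mean. Moving from `s` to a larger `s'` takes weight `T s - T s'` away
from the least value `1` and adds weight to the values of `r` on `[s, s']`, which are at least
`r s`. Both changes push the mean up.
-/

open MeasureTheory Set intervalIntegral

theorem weighted_mean_le_of_transfer {K : Type*} [Field K] [LinearOrder K] [IsStrictOrderedRing K]
    {t t' a b c d k : K} (ht : 0 ≤ t) (ht' : t' ≤ t) (hba : b ≤ a) (hk : 1 ≤ k) (hak : a ≤ k * b)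
    (hd : 0 ≤ d) (hkd : k * d ≤ c) (hpos : 0 < t + b) (hpos' : 0 < t' + (b + d)) :
    (t + a) / (t + b) ≤ (t' + (a + c)) / (t' + (b + d)) := by
  set m := (t + a) / (t + b)
  have one_le_m : 1 ≤ m := (one_le_div hpos).2 (by gcongr)
  have m_le_k : m ≤ k := (div_le_iff₀ hpos).2 <|
    calc t + a ≤ k * t + k * b := add_le_add (le_mul_of_one_le_left ht hk) hak
      _ = k * (t + b) := by ring
  have m_mul : m * (t + b) = t + a := div_mul_cancel₀ _ hpos.ne'
  rw [le_div_iff₀ hpos']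
  calc m * (t' + (b + d)) = m * (t + b) - m * (t - t') + m * d := by ring
    _ ≤ (t + a) - 1 * (t - t') + k * d := by
      rw [m_mul]
      have := sub_nonneg.2 ht'
      gcongr
    _ ≤ (t + a) - 1 * (t - t') + c := by gcongr
    _ = t' + (a + c) := by ring

section MonotoneFactor

variable {μ : Measure ℝ} {r : ℝ → ℝ} {a b : ℝ}

theorem intervalIntegrable_smul_of_monotoneOn {E : Type*} [NormedAddCommGroup E] [NormedSpace ℝ E]
    {f : ℝ → E} (hr : MonotoneOn r (uIcc a b)) (hf : IntervalIntegrable f μ a b) :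
    IntervalIntegrable (fun x => r x • f x) μ a b := by
  rw [intervalIntegrable_iff] at hf ⊢
  have r_meas : AEMeasurable r (μ.restrict (uIoc a b)) :=
    aemeasurable_restrict_of_monotoneOn measurableSet_uIoc (hr.mono uIoc_subset_uIcc)
  refine hf.bdd_smul (max |r (a ⊓ b)| |r (a ⊔ b)|) r_meas.aestronglyMeasurable <|
    ae_restrict_of_forall_mem measurableSet_uIoc fun x hx => ?_
  have hx : x ∈ uIcc a b := uIoc_subset_uIcc hx
  exact abs_le_max_abs_abs (hr (left_mem_Icc.2 inf_le_sup) hx hx.1)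
    (hr hx (right_mem_Icc.2 inf_le_sup) hx.2)

theorem mul_integral_le_integral_mul_of_monotoneOn {φ : ℝ → ℝ} (hab : a ≤ b)
    (hr : MonotoneOn r (Icc a b)) (hφ_nonneg : ∀ x ∈ Icc a b, 0 ≤ φ x)
    (hφ : IntervalIntegrable φ μ a b) :
    r a * ∫ x in a..b, φ x ∂μ ≤ ∫ x in a..b, r x * φ x ∂μ := by
  rw [← intervalIntegral.integral_const_mul]
  refine integral_mono_on hab (hφ.const_mul _)
    (intervalIntegrable_smul_of_monotoneOn (uIcc_of_le hab ▸ hr) hφ) fun x hx => ?_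
  exact mul_le_mul_of_nonneg_right (hr (left_mem_Icc.2 hab) hx hx.1) (hφ_nonneg x hx)

theorem integral_mul_le_mul_integral_of_monotoneOn {φ : ℝ → ℝ} (hab : a ≤ b)
    (hr : MonotoneOn r (Icc a b)) (hφ_nonneg : ∀ x ∈ Icc a b, 0 ≤ φ x)
    (hφ : IntervalIntegrable φ μ a b) :
    ∫ x in a..b, r x * φ x ∂μ ≤ r b * ∫ x in a..b, φ x ∂μ := by
  rw [← intervalIntegral.integral_const_mul]
  refine integral_mono_on hab
    (intervalIntegrable_smul_of_monotoneOn (uIcc_of_le hab ▸ hr) hφ) (hφ.const_mul _) fun x hx => ?_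
  exact mul_le_mul_of_nonneg_right (hr hx (right_mem_Icc.2 hab) hx.2) (hφ_nonneg x hx)

end MonotoneFactor

theorem quotient_T_plus_integral_monotone_general {μ : Measure ℝ} {α β : ℝ} {ψ φ r T : ℝ → ℝ}
    (hφ : IntervalIntegrable φ μ α β) (hφ_nonneg : ∀ υ ∈ Icc α β, 0 ≤ φ υ)
    (hψ : ∀ υ ∈ Icc α β, ψ υ = r υ * φ υ) (hr : MonotoneOn r (Icc α β)) (hrα : 1 ≤ r α)
    (hT_nonneg : ∀ s ∈ Icc α β, 0 ≤ T s) (hT : AntitoneOn T (Icc α β)) :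
    MonotoneOn (fun s => (T s + ∫ υ in α..s, ψ υ ∂μ) / (T s + ∫ υ in α..s, φ υ ∂μ))
      {s ∈ Icc α β | 0 < T s + ∫ υ in α..s, φ υ ∂μ} := by
  rintro s ⟨hs, hs_pos⟩ s' ⟨hs', hs'_pos⟩ hss'
  have hαβ : α ≤ β := hs.1.trans hs.2
  have one_le_r : ∀ υ ∈ Icc α β, 1 ≤ r υ := fun υ hυ =>
    hrα.trans (hr (left_mem_Icc.2 hαβ) hυ hυ.1)
  have sub : Icc α s ⊆ Icc α β := Icc_subset_Icc_right hs.2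
  have sub' : Icc s s' ⊆ Icc α β := Icc_subset_Icc hs.1 hs'.2
  have hφs : IntervalIntegrable φ μ α s :=
    hφ.mono_set <| by rwa [uIcc_of_le hs.1, uIcc_of_le hαβ]
  have hφs' : IntervalIntegrable φ μ s s' :=
    hφ.mono_set <| by rwa [uIcc_of_le hss', uIcc_of_le hαβ]
  have hrφs : IntervalIntegrable (fun υ => r υ * φ υ) μ α s :=
    intervalIntegrable_smul_of_monotoneOn (uIcc_of_le hs.1 ▸ hr.mono sub) hφs
  have hrφs' : IntervalIntegrable (fun υ => r υ * φ υ) μ s s' :=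
    intervalIntegrable_smul_of_monotoneOn (uIcc_of_le hss' ▸ hr.mono sub') hφs'
  have integral_ψ : ∀ v ∈ Icc α β, ∫ υ in α..v, ψ υ ∂μ = ∫ υ in α..v, r υ * φ υ ∂μ :=
    fun v hv => integral_congr fun υ hυ =>
      hψ υ (Icc_subset_Icc_right hv.2 (uIcc_of_le hv.1 ▸ hυ))
  simp only [integral_ψ s hs, integral_ψ s' hs']
  rw [← integral_add_adjacent_intervals hφs hφs'] at hs'_pos ⊢
  rw [← integral_add_adjacent_intervals hrφs hrφs']
  refine weighted_mean_le_of_transfer (k := r s) (hT_nonneg s hs) (hT hs hs' hss') ?_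
    (one_le_r s hs) ?_ ?_ ?_ hs_pos hs'_pos
  · exact integral_mono_on hs.1 hφs hrφs fun υ hυ =>
      le_mul_of_one_le_left (hφ_nonneg υ (sub hυ)) (one_le_r υ (sub hυ))
  · exact integral_mul_le_mul_integral_of_monotoneOn hs.1 (hr.mono sub)
      (fun υ hυ => hφ_nonneg υ (sub hυ)) hφs
  · exact integral_nonneg hss' fun υ hυ => hφ_nonneg υ (sub' hυ)
  · exact mul_integral_le_integral_mul_of_monotoneOn hss' (hr.mono sub')
      (fun υ hυ => hφ_nonneg υ (sub' hυ)) hφs'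

theorem quotient_T_plus_integral_monotone
    (α β : ℝ) (hαβ : α < β) (ψ φ T : ℝ → ℝ)
    (hψc : ContinuousOn ψ (Icc α β))
    (hφc : ContinuousOn φ (Icc α β))
    (hφpos : ∀ υ ∈ Icc α β, 0 < φ υ)
    (hratio : MonotoneOn (fun υ => ψ υ / φ υ) (Icc α β))
    (hinit : 1 ≤ ψ α / φ α)
    (hTnonneg : ∀ s ∈ Icc α β, 0 ≤ T s)
    (hTdiff : DifferentiableOn ℝ T (Icc α β))
    (hTdec : AntitoneOn T (Icc α β)) :
    ∀ s₁ s₂ : ℝ, α ≤ s₁ → s₁ ≤ s₂ → s₂ ≤ β →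
      (α < s₁ ∨ 0 < T s₁ + ∫ υ in α..s₁, φ υ) →
      (T s₁ + ∫ υ in α..s₁, ψ υ) / (T s₁ + ∫ υ in α..s₁, φ υ) ≤
        (T s₂ + ∫ υ in α..s₂, ψ υ) / (T s₂ + ∫ υ in α..s₂, φ υ) := by
  intro s₁ s₂ h₁ h₁₂ h₂ hpos
  have denom_pos : ∀ s ∈ Icc α β, α < s → 0 < T s + ∫ υ in α..s, φ υ := fun s hs hαs =>
    have sub : Icc α s ⊆ Icc α β := Icc_subset_Icc_right hs.2
    add_pos_of_nonneg_of_pos (hTnonneg s hs) <|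
      intervalIntegral_pos_of_pos_on ((hφc.mono sub).intervalIntegrable_of_Icc hs.1)
        (fun υ hυ => hφpos υ (sub (Ioo_subset_Icc_self hυ))) hαs
  obtain rfl | hlt := h₁₂.eq_or_lt
  · rfl
  have hs₁ : s₁ ∈ Icc α β := ⟨h₁, h₁₂.trans h₂⟩
  have hs₂ : s₂ ∈ Icc α β := ⟨h₁.trans h₁₂, h₂⟩
  exact quotient_T_plus_integral_monotone_general (hφc.intervalIntegrable_of_Icc hαβ.le)
    (fun υ hυ => (hφpos υ hυ).le) (fun υ hυ => (div_mul_cancel₀ (ψ υ) (hφpos υ hυ).ne').symm)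
    hratio hinit hTnonneg hTdec ⟨hs₁, hpos.elim (denom_pos s₁ hs₁) id⟩
    ⟨hs₂, denom_pos s₂ hs₂ (h₁.trans_lt hlt)⟩ h₁₂
end

section
/- Let a ∈ ℕ and let ψ, φ : ℕ → ℝ be sequences with φ(k) > 0 for all k, such that k ↦ ψ(k)/φ(k) is increasing and ψ(a)/φ(a) ≥ 1. Let T : ℕ → [0,∞) be a decreasing sequence. Then the function n ↦ (T(n) + ∑_{k=a}^{n-1} ψ(k)) / (T(n) + ∑_{k=a}^{n-1} φ(k)) is increasing for integers n ≥ a+1 (and for all n ≥ a at which the denominator is positive). -/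
/-!
Adding terms to the sums moves the quotient towards their ratios: every ratio `ψ k / φ k` with
`k ≥ n₁` is at least `r = ψ n₁ / φ n₁`, while the quotient at `n₁` is a weighted average of `1 ≤ r`
(with weight `T n₁`) and of ratios at most `r`, so passing to the longer sums with `T n₁` kept fixed
can only increase it. Lowering `T n₁` to `T n₂` afterwards increases it again, because the numerator
dominates the denominator. In this order both denominators are positive even if `n₁ = a` and
`T n₂ = 0`.
-/

section Field

variable {K : Type*} [Field K] [LinearOrder K] [IsStrictOrderedRing K]

theorem div_le_add_div_add_of_div_mul_le {a b c d : K} (hb : 0 < b) (hd : 0 ≤ d)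
    (h : a / b * d ≤ c) : a / b ≤ (a + c) / (b + d) := by
  rw [le_div_iff₀ (add_pos_of_pos_of_nonneg hb hd), mul_add, div_mul_cancel₀ a hb.ne']
  gcongr

theorem antitoneOn_add_div_add {p q : K} (hqp : q ≤ p) :
    AntitoneOn (fun t => (t + p) / (t + q)) (Set.Ioi (-q)) := by
  have one_add_div : ∀ t ∈ Set.Ioi (-q), (t + p) / (t + q) = 1 + (p - q) / (t + q) := by
    intro t ht
    have ht' : t + q ≠ 0 := (neg_lt_iff_pos_add.mp ht).ne'
    field_simp
    ring
  intro s hs t ht hst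
  have hsq : 0 < s + q := neg_lt_iff_pos_add.mp hs
  simp only [one_add_div s hs, one_add_div t ht]
  gcongr

variable {ι : Type*} {s : Finset ι} {ψ φ : ι → K} {r : K}

theorem sum_le_mul_sum_of_div_le (hφ : ∀ k ∈ s, 0 < φ k) (h : ∀ k ∈ s, ψ k / φ k ≤ r) :
    ∑ k ∈ s, ψ k ≤ r * ∑ k ∈ s, φ k := by
  rw [Finset.mul_sum]
  exact Finset.sum_le_sum fun k hk => (div_le_iff₀ (hφ k hk)).mp (h k hk)

theorem mul_sum_le_sum_of_le_div (hφ : ∀ k ∈ s, 0 < φ k) (h : ∀ k ∈ s, r ≤ ψ k / φ k) :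
    r * ∑ k ∈ s, φ k ≤ ∑ k ∈ s, ψ k := by
  rw [Finset.mul_sum]
  exact Finset.sum_le_sum fun k hk => (le_div_iff₀ (hφ k hk)).mp (h k hk)

end Field

section Preorder

variable {ι : Type*} [Preorder ι] [LocallyFiniteOrder ι]

theorem add_sum_Ico_pos {M : Type*} [AddCommMonoid M] [PartialOrder M]
    [IsOrderedCancelAddMonoid M] {φ : ι → M} {a n : ι} {t : M} (hφ : ∀ k, a ≤ k → 0 < φ k)
    (ht : 0 ≤ t) (han : a < n) : 0 < t + ∑ k ∈ Finset.Ico a n, φ k :=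
  add_pos_of_nonneg_of_pos ht <|
    Finset.sum_pos (fun k hk => hφ k (Finset.mem_Ico.mp hk).1) (Finset.nonempty_Ico.mpr han)

variable {K : Type*} [Field K] [LinearOrder K] [IsStrictOrderedRing K]
  {a n : ι} {ψ φ : ι → K} {t : K}

theorem sum_Ico_le_sum_Ico_of_monotoneOn_div (hφ : ∀ k, a ≤ k → 0 < φ k)
    (hratio : MonotoneOn (fun k => ψ k / φ k) (Set.Ici a)) (hinit : 1 ≤ ψ a / φ a) :
    ∑ k ∈ Finset.Ico a n, φ k ≤ ∑ k ∈ Finset.Ico a n, ψ k := by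
  have le_of_mem : ∀ k ∈ Finset.Ico a n, a ≤ k := fun k hk => (Finset.mem_Ico.mp hk).1
  simpa only [one_mul] using mul_sum_le_sum_of_le_div (fun k hk => hφ k (le_of_mem k hk))
    fun k hk => hinit.trans (hratio Set.self_mem_Ici (le_of_mem k hk) (le_of_mem k hk))

theorem add_sum_Ico_div_le_div (hφ : ∀ k, a ≤ k → 0 < φ k)
    (hratio : MonotoneOn (fun k => ψ k / φ k) (Set.Ici a)) (hinit : 1 ≤ ψ a / φ a)
    (ht : 0 ≤ t) (han : a ≤ n) (hpos : 0 < t + ∑ k ∈ Finset.Ico a n, φ k) :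
    (t + ∑ k ∈ Finset.Ico a n, ψ k) / (t + ∑ k ∈ Finset.Ico a n, φ k) ≤ ψ n / φ n := by
  have one_le : 1 ≤ ψ n / φ n := hinit.trans (hratio Set.self_mem_Ici han han)
  have sum_le : ∑ k ∈ Finset.Ico a n, ψ k ≤ ψ n / φ n * ∑ k ∈ Finset.Ico a n, φ k :=
    sum_le_mul_sum_of_div_le (fun k hk => hφ k (Finset.mem_Ico.mp hk).1) fun k hk =>
      hratio (Finset.mem_Ico.mp hk).1 han (Finset.mem_Ico.mp hk).2.le
  rw [div_le_iff₀ hpos, mul_add]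
  exact add_le_add (le_mul_of_one_le_left ht one_le) sum_le

end Preorder

section LinearOrder

variable {ι : Type*} [LinearOrder ι] [LocallyFiniteOrder ι]

theorem sum_Ico_add_sum_Ico {M : Type*} [AddCommMonoid M] (f : ι → M) {a b c : ι}
    (hab : a ≤ b) (hbc : b ≤ c) :
    ∑ k ∈ Finset.Ico a b, f k + ∑ k ∈ Finset.Ico b c, f k = ∑ k ∈ Finset.Ico a c, f k := by
  rw [← Finset.sum_union (Finset.Ico_disjoint_Ico_consecutive a b c),
    Finset.Ico_union_Ico_eq_Ico hab hbc]

variable {K : Type*} [Field K] [LinearOrder K] [IsStrictOrderedRing K]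
  {a m n : ι} {ψ φ : ι → K} {t : K}

theorem add_sum_Ico_div_mono (hφ : ∀ k, a ≤ k → 0 < φ k)
    (hratio : MonotoneOn (fun k => ψ k / φ k) (Set.Ici a)) (hinit : 1 ≤ ψ a / φ a)
    (ht : 0 ≤ t) (ham : a ≤ m) (hmn : m ≤ n) (hpos : 0 < t + ∑ k ∈ Finset.Ico a m, φ k) :
    (t + ∑ k ∈ Finset.Ico a m, ψ k) / (t + ∑ k ∈ Finset.Ico a m, φ k) ≤
      (t + ∑ k ∈ Finset.Ico a n, ψ k) / (t + ∑ k ∈ Finset.Ico a n, φ k) := by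
  have φ_pos : ∀ k ∈ Finset.Ico m n, 0 < φ k := fun k hk =>
    hφ k (ham.trans (Finset.mem_Ico.mp hk).1)
  have tail_nonneg : 0 ≤ ∑ k ∈ Finset.Ico m n, φ k :=
    Finset.sum_nonneg fun k hk => (φ_pos k hk).le
  have mul_sum_le : ψ m / φ m * ∑ k ∈ Finset.Ico m n, φ k ≤ ∑ k ∈ Finset.Ico m n, ψ k :=
    mul_sum_le_sum_of_le_div φ_pos fun k hk =>
      hratio ham (ham.trans (Finset.mem_Ico.mp hk).1) (Finset.mem_Ico.mp hk).1
  rw [← sum_Ico_add_sum_Ico ψ ham hmn, ← sum_Ico_add_sum_Ico φ ham hmn, ← add_assoc, ← add_assoc]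
  refine div_le_add_div_add_of_div_mul_le hpos tail_nonneg (le_trans ?_ mul_sum_le)
  exact mul_le_mul_of_nonneg_right (add_sum_Ico_div_le_div hφ hratio hinit ht ham hpos) tail_nonneg

theorem quotient_T_plus_sum_monotone_general {T : ι → K} (hφ : ∀ k, a ≤ k → 0 < φ k)
    (hratio : MonotoneOn (fun k => ψ k / φ k) (Set.Ici a)) (hinit : 1 ≤ ψ a / φ a)
    (hTnonneg : ∀ k, a ≤ k → 0 ≤ T k) (hT : AntitoneOn T (Set.Ici a))
    (ham : a ≤ m) (hmn : m ≤ n) (hpos : 0 < T m + ∑ k ∈ Finset.Ico a m, φ k) :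
    (T m + ∑ k ∈ Finset.Ico a m, ψ k) / (T m + ∑ k ∈ Finset.Ico a m, φ k) ≤
      (T n + ∑ k ∈ Finset.Ico a n, ψ k) / (T n + ∑ k ∈ Finset.Ico a n, φ k) := by
  obtain rfl | hlt := hmn.eq_or_lt
  · exact le_rfl
  have han : a ≤ n := ham.trans hmn
  have hTnm : T n ≤ T m := hT ham han hmn
  have hn : -∑ k ∈ Finset.Ico a n, φ k < T n :=
    neg_lt_iff_pos_add.mpr (add_sum_Ico_pos hφ (hTnonneg n han) (ham.trans_lt hlt))
  calc (T m + ∑ k ∈ Finset.Ico a m, ψ k) / (T m + ∑ k ∈ Finset.Ico a m, φ k)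
    _ ≤ (T m + ∑ k ∈ Finset.Ico a n, ψ k) / (T m + ∑ k ∈ Finset.Ico a n, φ k) :=
      add_sum_Ico_div_mono hφ hratio hinit (hTnonneg m ham) ham hmn hpos
    _ ≤ (T n + ∑ k ∈ Finset.Ico a n, ψ k) / (T n + ∑ k ∈ Finset.Ico a n, φ k) :=
      antitoneOn_add_div_add (sum_Ico_le_sum_Ico_of_monotoneOn_div hφ hratio hinit)
        hn (hn.trans_le hTnm) hTnm

end LinearOrder

theorem quotient_T_plus_sum_monotone
    (a : ℕ) (ψ φ T : ℕ → ℝ) (hφpos : ∀ k, 0 < φ k)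
    (hratio : Monotone fun k => ψ k / φ k)
    (hinit : 1 ≤ ψ a / φ a)
    (hTnonneg : ∀ n, 0 ≤ T n)
    (hTdec : Antitone T) :
    ∀ n₁ n₂ : ℕ, a ≤ n₁ → n₁ ≤ n₂ →
      (a + 1 ≤ n₁ ∨ 0 < T n₁ + ∑ k ∈ Finset.Ico a n₁, φ k) →
      (T n₁ + ∑ k ∈ Finset.Ico a n₁, ψ k) / (T n₁ + ∑ k ∈ Finset.Ico a n₁, φ k) ≤
        (T n₂ + ∑ k ∈ Finset.Ico a n₂, ψ k) / (T n₂ + ∑ k ∈ Finset.Ico a n₂, φ k) :=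
  fun n₁ _ h₁ h₁₂ hpos => quotient_T_plus_sum_monotone_general (fun k _ => hφpos k)
    (hratio.monotoneOn _) hinit (fun k _ => hTnonneg k) (hTdec.antitoneOn _) h₁ h₁₂
    (hpos.elim (add_sum_Ico_pos (fun k _ => hφpos k) (hTnonneg n₁)) id)
end

section
/- Let a ∈ ℕ and let ψ, φ : ℕ → ℝ be sequences with ψ(k) > 0 and φ(k) > 0 for all k, such that k ↦ ψ(k)/φ(k) is increasing. Let T₁, T₂ : ℕ → (0,∞) be sequences, and suppose that for every integer n ≥ a+1: ψ(n)/(∑_{k=a}^{n-1} ψ(k)) ≥ (T₁(n+1) − T₁(n))/T₁(n) ≥ (T₂(n+1) − T₂(n))/T₂(n) ≥ φ(n)/(∑_{k=a}^{n-1} φ(k)). Then the function n ↦ (T₁(n) + ∑_{k=a}^{n-1} ψ(k)) / (T₂(n) + ∑_{k=a}^{n-1} φ(k)) is increasing for integers n ≥ a+1. -/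
/-!
A ratio of positive sequences increases exactly when the relative increment `Δf / f` of the
numerator dominates that of the denominator. The relative increment of a sum is a weighted mean of
those of its summands, and that of a partial sum `∑ k ∈ Ico a n, ψ k` is `ψ n / ∑ k ∈ Ico a n, ψ k`.
Hence the relative increment of `T₂ + ∑ φ` is at most that of `T₂`, which is at most that of `T₁`,
which in turn is at most that of `T₁ + ∑ ψ`.
-/

section RelIncrement

variable {K : Type*} [Field K]

/-- The relative increment `Δf(n) / f(n)` of a sequence, the discrete logarithmic derivative: it
measures which of two positive sequences grows faster. It is `0` where `f n = 0`. -/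
def relIncrement (f : ℕ → K) (n : ℕ) : K :=
  (f (n + 1) - f n) / f n

theorem relIncrement_sum_Ico (f : ℕ → K) {a n : ℕ} (h : a ≤ n) :
    relIncrement (fun m => ∑ k ∈ Finset.Ico a m, f k) n = f n / ∑ k ∈ Finset.Ico a n, f k := by
  rw [relIncrement, Finset.sum_Ico_succ_top h, add_sub_cancel_left]

theorem relIncrement_eq_div_sub_one {f : ℕ → K} {n : ℕ} (hf : f n ≠ 0) :
    relIncrement f n = f (n + 1) / f n - 1 := by
  rw [relIncrement, sub_div, div_self hf]

variable [LinearOrder K] [IsStrictOrderedRing K] {f g : ℕ → K} {n : ℕ} {c : K}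

theorem relIncrement_add_le (hf : 0 < f n) (hg : 0 < g n)
    (hfc : relIncrement f n ≤ c) (hgc : relIncrement g n ≤ c) : relIncrement (f + g) n ≤ c := by
  rw [relIncrement, div_le_iff₀ hf] at hfc
  rw [relIncrement, div_le_iff₀ hg] at hgc
  rw [relIncrement, Pi.add_apply, Pi.add_apply, div_le_iff₀ (add_pos hf hg)]
  linarith

theorem le_relIncrement_add (hf : 0 < f n) (hg : 0 < g n)
    (hcf : c ≤ relIncrement f n) (hcg : c ≤ relIncrement g n) : c ≤ relIncrement (f + g) n := by
  rw [relIncrement, le_div_iff₀ hf] at hcf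
  rw [relIncrement, le_div_iff₀ hg] at hcg
  rw [relIncrement, Pi.add_apply, Pi.add_apply, le_div_iff₀ (add_pos hf hg)]
  linarith

theorem div_le_div_succ_iff_relIncrement_le (hf : 0 < f n) (hg : 0 < g n) (hg' : 0 < g (n + 1)) :
    f n / g n ≤ f (n + 1) / g (n + 1) ↔ relIncrement g n ≤ relIncrement f n := by
  rw [relIncrement_eq_div_sub_one hf.ne', relIncrement_eq_div_sub_one hg.ne', sub_le_sub_iff_right,
    div_le_div_iff₀ hg hg', div_le_div_iff₀ hg hf, mul_comm (f n)]

theorem monotoneOn_div_of_relIncrement_le {m : ℕ}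
    (hf : ∀ n, m ≤ n → 0 < f n) (hg : ∀ n, m ≤ n → 0 < g n)
    (h : ∀ n, m ≤ n → relIncrement g n ≤ relIncrement f n) :
    MonotoneOn (fun n => f n / g n) (Set.Ici m) :=
  monotoneOn_nat_Ici_of_le_succ fun n hn =>
    (div_le_div_succ_iff_relIncrement_le (hf n hn) (hg n hn) (hg _ (Nat.le_succ_of_le hn))).2
      (h n hn)

theorem monotoneOn_add_div_add_of_relIncrement_le {m : ℕ} {f₁ f₂ g₁ g₂ : ℕ → K}
    (hf₁ : ∀ n, m ≤ n → 0 < f₁ n) (hf₂ : ∀ n, m ≤ n → 0 < f₂ n)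
    (hg₁ : ∀ n, m ≤ n → 0 < g₁ n) (hg₂ : ∀ n, m ≤ n → 0 < g₂ n)
    (hchain : ∀ n, m ≤ n → relIncrement g₂ n ≤ relIncrement f₂ n ∧
      relIncrement f₂ n ≤ relIncrement f₁ n ∧ relIncrement f₁ n ≤ relIncrement g₁ n) :
    MonotoneOn (fun n => (f₁ n + g₁ n) / (f₂ n + g₂ n)) (Set.Ici m) := by
  refine monotoneOn_div_of_relIncrement_le (f := f₁ + g₁) (g := f₂ + g₂)
    (fun n hn => add_pos (hf₁ n hn) (hg₁ n hn)) (fun n hn => add_pos (hf₂ n hn) (hg₂ n hn))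
    fun n hn => ?_
  obtain ⟨hgf₂, hff, hfg₁⟩ := hchain n hn
  calc relIncrement (f₂ + g₂) n
      ≤ relIncrement f₂ n := relIncrement_add_le (hf₂ n hn) (hg₂ n hn) le_rfl hgf₂
    _ ≤ relIncrement f₁ n := hff
    _ ≤ relIncrement (f₁ + g₁) n := le_relIncrement_add (hf₁ n hn) (hg₁ n hn) le_rfl hfg₁

end RelIncrement

theorem sum_Ico_pos {ι M : Type*} [Preorder ι] [LocallyFiniteOrder ι]
    [AddCommMonoid M] [PartialOrder M] [IsOrderedCancelAddMonoid M]
    {f : ι → M} {a n : ι} (hf : ∀ k, a ≤ k → 0 < f k) (h : a < n) :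
    0 < ∑ k ∈ Finset.Ico a n, f k :=
  Finset.sum_pos (fun k hk => hf k (Finset.mem_Ico.1 hk).1) (Finset.nonempty_Ico.2 h)

theorem quotient_T1_plus_sum_T2_plus_sum_monotone_general
    {K : Type*} [Field K] [LinearOrder K] [IsStrictOrderedRing K]
    {a : ℕ} {ψ φ T₁ T₂ : ℕ → K}
    (hψpos : ∀ k, a ≤ k → 0 < ψ k) (hφpos : ∀ k, a ≤ k → 0 < φ k)
    (hT₁pos : ∀ n, a + 1 ≤ n → 0 < T₁ n) (hT₂pos : ∀ n, a + 1 ≤ n → 0 < T₂ n)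
    (hchain : ∀ n, a + 1 ≤ n →
      φ n / (∑ k ∈ Finset.Ico a n, φ k) ≤ relIncrement T₂ n ∧
      relIncrement T₂ n ≤ relIncrement T₁ n ∧
      relIncrement T₁ n ≤ ψ n / (∑ k ∈ Finset.Ico a n, ψ k)) :
    MonotoneOn
      (fun n => (T₁ n + ∑ k ∈ Finset.Ico a n, ψ k) / (T₂ n + ∑ k ∈ Finset.Ico a n, φ k))
      (Set.Ici (a + 1)) := by
  refine monotoneOn_add_div_add_of_relIncrement_le hT₁pos hT₂pos
    (fun n hn => sum_Ico_pos hψpos hn) (fun n hn => sum_Ico_pos hφpos hn) fun n hn => ?_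
  rw [relIncrement_sum_Ico φ (Nat.le_of_succ_le hn), relIncrement_sum_Ico ψ (Nat.le_of_succ_le hn)]
  exact hchain n hn

theorem quotient_T1_plus_sum_T2_plus_sum_monotone
    (a : ℕ) (ψ φ T₁ T₂ : ℕ → ℝ)
    (hψpos : ∀ k, 0 < ψ k) (hφpos : ∀ k, 0 < φ k)
    (hratio : Monotone fun k => ψ k / φ k)
    (hT₁pos : ∀ n, 0 < T₁ n) (hT₂pos : ∀ n, 0 < T₂ n)
    (hchain : ∀ n : ℕ, a + 1 ≤ n →
      φ n / (∑ k ∈ Finset.Ico a n, φ k) ≤ (T₂ (n + 1) - T₂ n) / T₂ n ∧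
      (T₂ (n + 1) - T₂ n) / T₂ n ≤ (T₁ (n + 1) - T₁ n) / T₁ n ∧
      (T₁ (n + 1) - T₁ n) / T₁ n ≤ ψ n / (∑ k ∈ Finset.Ico a n, ψ k)) :
    ∀ n₁ n₂ : ℕ, a + 1 ≤ n₁ → n₁ ≤ n₂ →
      (T₁ n₁ + ∑ k ∈ Finset.Ico a n₁, ψ k) / (T₂ n₁ + ∑ k ∈ Finset.Ico a n₁, φ k) ≤
        (T₁ n₂ + ∑ k ∈ Finset.Ico a n₂, ψ k) / (T₂ n₂ + ∑ k ∈ Finset.Ico a n₂, φ k) := by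
  intro n₁ n₂ h₁ h₁₂
  exact quotient_T1_plus_sum_T2_plus_sum_monotone_general (fun k _ => hψpos k) (fun k _ => hφpos k)
    (fun n _ => hT₁pos n) (fun n _ => hT₂pos n) hchain h₁ (h₁.trans h₁₂) h₁₂
end

section
/- Let r > 0 and let (ψ_n)_{n∈ℕ} and (φ_n)_{n∈ℕ} be real sequences with φ_n > 0 for all n, such that n ↦ ψ_n/φ_n is increasing. Suppose the power series Ψ(s) = ∑_{n=0}^∞ ψ_n s^n and Φ(s) = ∑_{n=0}^∞ φ_n s^n converge for every s ∈ (0,r). Then the function s ↦ Ψ(s)/Φ(s) is increasing on (0,r). -/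
/-!
After clearing denominators, `Ψ(x) / Φ(x) ≤ Ψ(y) / Φ(y)` says that a `2 × 2` determinant of sums is
nonnegative. By the Cauchy–Binet identity, twice this determinant is the sum over all pairs `(i, j)`
of `(ψ i * φ j - ψ j * φ i) * (y ^ i * x ^ j - y ^ j * x ^ i)`. For `x ≤ y` both factors have the
sign of `i - j`: the first because `ψ / φ` is increasing, the second because
`y ^ i * x ^ j - y ^ j * x ^ i = x ^ j * y ^ j * (y ^ (i - j) - x ^ (i - j))` for `j ≤ i`.
-/

section CauchyBinet

variable {ι R : Type*} [CommRing R]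

theorem sum_sum_minor_mul_minor (s : Finset ι) (a b c d : ι → R) :
    ∑ i ∈ s, ∑ j ∈ s, (a i * b j - a j * b i) * (c i * d j - c j * d i) =
      2 * ((∑ i ∈ s, a i * c i) * (∑ i ∈ s, b i * d i) -
        (∑ i ∈ s, a i * d i) * (∑ i ∈ s, b i * c i)) := by
  have expand (i j : ι) : (a i * b j - a j * b i) * (c i * d j - c j * d i) =
      (a i * c i) * (b j * d j) - (a i * d i) * (b j * c j) +
        ((b i * d i) * (a j * c j) - (b i * c i) * (a j * d j)) := by ring
  simp only [expand, Finset.sum_add_distrib, Finset.sum_sub_distrib, ← Finset.sum_mul_sum]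
  ring

variable [LinearOrder R] [IsStrictOrderedRing R] {a b c d : ι → R}

theorem sum_mul_sum_le_sum_mul_sum_of_minor_mul_minor_nonneg {s : Finset ι}
    (h : ∀ i ∈ s, ∀ j ∈ s, 0 ≤ (a i * b j - a j * b i) * (c i * d j - c j * d i)) :
    (∑ i ∈ s, a i * d i) * (∑ i ∈ s, b i * c i) ≤
      (∑ i ∈ s, a i * c i) * (∑ i ∈ s, b i * d i) := by
  have hsum := Finset.sum_nonneg fun i hi => Finset.sum_nonneg (h i hi)
  rw [sum_sum_minor_mul_minor] at hsum
  exact sub_nonneg.mp (nonneg_of_mul_nonneg_right hsum two_pos)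

theorem tsum_mul_tsum_le_tsum_mul_tsum_of_minor_mul_minor_nonneg
    [TopologicalSpace R] [OrderClosedTopology R] [ContinuousMul R]
    (h : ∀ i j, 0 ≤ (a i * b j - a j * b i) * (c i * d j - c j * d i))
    (hac : Summable fun i => a i * c i) (had : Summable fun i => a i * d i)
    (hbc : Summable fun i => b i * c i) (hbd : Summable fun i => b i * d i) :
    (∑' i, a i * d i) * (∑' i, b i * c i) ≤ (∑' i, a i * c i) * (∑' i, b i * d i) :=
  le_of_tendsto_of_tendsto' (Filter.Tendsto.mul had.hasSum hbc.hasSum)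
    (Filter.Tendsto.mul hac.hasSum hbd.hasSum) fun _ =>
    sum_mul_sum_le_sum_mul_sum_of_minor_mul_minor_nonneg fun i _ j _ => h i j

end CauchyBinet

theorem pow_mul_pow_le_pow_mul_pow {R : Type*} [CommSemiring R] [PartialOrder R]
    [IsOrderedRing R] {x y : R} (hx : 0 ≤ x) (hxy : x ≤ y) {i j : ℕ} (hij : i ≤ j) :
    y ^ i * x ^ j ≤ y ^ j * x ^ i := by
  have hy : 0 ≤ y := hx.trans hxy
  calc y ^ i * x ^ j = y ^ i * x ^ i * x ^ (j - i) := by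
        rw [mul_assoc, pow_mul_pow_sub x hij]
    _ ≤ y ^ i * x ^ i * y ^ (j - i) := by gcongr
    _ = y ^ j * x ^ i := by rw [mul_right_comm, pow_mul_pow_sub y hij]

section Quotient

variable {𝕜 : Type*} [Field 𝕜] [LinearOrder 𝕜] [IsStrictOrderedRing 𝕜]

theorem minor_mul_minor_nonneg_of_monotone_div {ι : Type*} [LinearOrder ι] {ψ φ u v : ι → 𝕜}
    (hφ : ∀ i, 0 < φ i) (hratio : Monotone fun i => ψ i / φ i)
    (huv : ∀ ⦃i j⦄, i ≤ j → u i * v j ≤ u j * v i) (i j : ι) :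
    0 ≤ (ψ i * φ j - ψ j * φ i) * (u i * v j - u j * v i) := by
  have hψφ {i j : ι} (hij : i ≤ j) : ψ i * φ j ≤ ψ j * φ i :=
    (div_le_div_iff₀ (hφ i) (hφ j)).mp (hratio hij)
  obtain hij | hji := le_total i j
  · exact mul_nonneg_of_nonpos_of_nonpos (sub_nonpos.mpr (hψφ hij)) (sub_nonpos.mpr (huv hij))
  · exact mul_nonneg (sub_nonneg.mpr (hψφ hji)) (sub_nonneg.mpr (huv hji))

variable [TopologicalSpace 𝕜] [OrderClosedTopology 𝕜] [ContinuousMul 𝕜]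

/-- The sign condition `hK` on the `2 × 2` minors of `K` is the one in total positivity of order
two. -/
theorem monotoneOn_tsum_mul_div_tsum_mul {ι α : Type*} [LinearOrder ι] [Preorder α]
    {ψ φ : ι → 𝕜} {K : ι → α → 𝕜} {S : Set α}
    (hφ : ∀ i, 0 < φ i) (hratio : Monotone fun i => ψ i / φ i)
    (hK : ∀ x ∈ S, ∀ y ∈ S, x ≤ y → ∀ ⦃i j⦄, i ≤ j → K i y * K j x ≤ K j y * K i x)
    (hψK : ∀ s ∈ S, Summable fun i => ψ i * K i s)
    (hφK : ∀ s ∈ S, Summable fun i => φ i * K i s)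
    (hpos : ∀ s ∈ S, 0 < ∑' i, φ i * K i s) :
    MonotoneOn (fun s => (∑' i, ψ i * K i s) / ∑' i, φ i * K i s) S := fun x hx y hy hxy =>
  (div_le_div_iff₀ (hpos x hx) (hpos y hy)).mpr <|
    tsum_mul_tsum_le_tsum_mul_tsum_of_minor_mul_minor_nonneg
      (minor_mul_minor_nonneg_of_monotone_div hφ hratio (hK x hx y hy hxy))
      (hψK y hy) (hψK x hx) (hφK y hy) (hφK x hx)

theorem quotient_power_series_monotone_general {ψ φ : ℕ → 𝕜} {S : Set 𝕜}
    (hS : ∀ s ∈ S, 0 ≤ s) (hφpos : ∀ n, 0 < φ n) (hratio : Monotone fun n => ψ n / φ n)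
    (hψsum : ∀ s ∈ S, Summable fun n => ψ n * s ^ n)
    (hφsum : ∀ s ∈ S, Summable fun n => φ n * s ^ n) :
    MonotoneOn (fun s => (∑' n : ℕ, ψ n * s ^ n) / (∑' n : ℕ, φ n * s ^ n)) S := by
  have hΦpos (s : 𝕜) (hs : s ∈ S) : 0 < ∑' n : ℕ, φ n * s ^ n :=
    calc 0 < φ 0 * s ^ 0 := by simpa using hφpos 0
      _ ≤ ∑' n : ℕ, φ n * s ^ n :=
        (hφsum s hs).le_tsum 0 fun n _ => mul_nonneg (hφpos n).le (pow_nonneg (hS s hs) n)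
  exact monotoneOn_tsum_mul_div_tsum_mul (K := fun n s => s ^ n) hφpos hratio
    (fun x hx _ _ hxy _ _ => pow_mul_pow_le_pow_mul_pow (hS x hx) hxy) hψsum hφsum hΦpos

end Quotient

theorem quotient_power_series_monotone
    (r : ℝ) (hr : 0 < r) (ψ φ : ℕ → ℝ) (hφpos : ∀ n, 0 < φ n)
    (hratio : Monotone fun n => ψ n / φ n)
    (hψsum : ∀ s ∈ Set.Ioo (0 : ℝ) r, Summable fun n => ψ n * s ^ n)
    (hφsum : ∀ s ∈ Set.Ioo (0 : ℝ) r, Summable fun n => φ n * s ^ n) :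
    MonotoneOn (fun s => (∑' n : ℕ, ψ n * s ^ n) / (∑' n : ℕ, φ n * s ^ n))
      (Set.Ioo (0 : ℝ) r) :=
  quotient_power_series_monotone_general (fun _ hs => hs.1.le) hφpos hratio hψsum hφsum
end

section
/- Let 0 < a < b, and let ψ, φ : [0,∞) → ℝ be measurable functions with φ(υ) > 0 for all υ ≥ 0, such that υ ↦ ψ(υ)/φ(υ) is increasing on [0,∞). Suppose that for every s ∈ (a,b) the functions υ ↦ ψ(υ)s^υ and υ ↦ φ(υ)s^υ are integrable on [0,∞). Then the function s ↦ (∫_0^∞ ψ(υ) s^υ dυ) / (∫_0^∞ φ(υ) s^υ dυ) is increasing on (a,b). -/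
open MeasureTheory Set

/-!
For two pairs of functions, the product of the minors `f₁ u * f₂ v - f₁ v * f₂ u` and
`g₁ u * g₂ v - g₁ v * g₂ u` integrates over the square to twice the determinant of the integrals
`∫ fᵢ * gⱼ` (Andréief's identity). When `f₂ / f₁` and `g₂ / g₁` are increasing, both minors change
sign only across the diagonal, so their product and that determinant are nonnegative. Taking the
pairs `(φ, ψ)` and `(s ^ ·, t ^ ·)` with `s ≤ t` gives the cross-multiplied inequality between the
quotients at `s` and `t`.
-/

/-- The ratio `g / f` is increasing on `s`, in the cross-multiplied form which says that the minors
`f u * g v - f v * g u` with `u ≤ v` are nonnegative, so that no division occurs. -/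
def MonotoneRatioOn {α R : Type*} [LE α] [Mul R] [LE R] (f g : α → R) (s : Set α) : Prop :=
  ∀ ⦃u⦄, u ∈ s → ∀ ⦃v⦄, v ∈ s → u ≤ v → f v * g u ≤ f u * g v

theorem monotoneRatioOn_iff_monotoneOn_div {α 𝕜 : Type*} [Preorder α] [Field 𝕜] [LinearOrder 𝕜]
    [IsStrictOrderedRing 𝕜] {f g : α → 𝕜} {s : Set α} (hf : ∀ u ∈ s, 0 < f u) :
    MonotoneRatioOn f g s ↔ MonotoneOn (fun u => g u / f u) s := by
  refine forall₅_congr fun u hu v hv _ => ?_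
  rw [div_le_div_iff₀ (hf u hu) (hf v hv), mul_comm (f v), mul_comm (f u)]

theorem monotoneRatioOn_rpow {s t : ℝ} (hs : 0 < s) (hst : s ≤ t) (A : Set ℝ) :
    MonotoneRatioOn (fun u => s ^ u) (fun u => t ^ u) A := by
  refine (monotoneRatioOn_iff_monotoneOn_div fun u _ => Real.rpow_pos_of_pos hs u).2 ?_
  simp only [← Real.div_rpow (hs.le.trans hst) hs.le]
  exact (Real.monotone_rpow_of_base_ge_one ((one_le_div hs).2 hst)).monotoneOn A

theorem MonotoneRatioOn.minor_mul_minor_nonneg {α R : Type*} [LinearOrder α] [CommRing R]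
    [PartialOrder R] [IsOrderedRing R] {f₁ f₂ g₁ g₂ : α → R} {s : Set α}
    (hf : MonotoneRatioOn f₁ f₂ s) (hg : MonotoneRatioOn g₁ g₂ s) {u v : α} (hu : u ∈ s)
    (hv : v ∈ s) :
    0 ≤ (f₁ u * f₂ v - f₁ v * f₂ u) * (g₁ u * g₂ v - g₁ v * g₂ u) := by
  rcases le_total u v with huv | hvu
  · exact mul_nonneg (sub_nonneg.2 (hf hu hv huv)) (sub_nonneg.2 (hg hu hv huv))
  · exact mul_nonneg_of_nonpos_of_nonpos (sub_nonpos.2 (hf hv hu hvu))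
      (sub_nonpos.2 (hg hv hu hvu))

section Integral

variable {α : Type*} [MeasurableSpace α] {μ : Measure α} [SFinite μ]

theorem integral_prod_minor_mul_minor {𝕜 : Type*} [RCLike 𝕜] {f₁ f₂ g₁ g₂ : α → 𝕜}
    (h₁₁ : Integrable (fun u => f₁ u * g₁ u) μ) (h₁₂ : Integrable (fun u => f₁ u * g₂ u) μ)
    (h₂₁ : Integrable (fun u => f₂ u * g₁ u) μ) (h₂₂ : Integrable (fun u => f₂ u * g₂ u) μ) :
    ∫ z : α × α, (f₁ z.1 * f₂ z.2 - f₁ z.2 * f₂ z.1) * (g₁ z.1 * g₂ z.2 - g₁ z.2 * g₂ z.1)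
        ∂μ.prod μ =
      2 * ((∫ u, f₁ u * g₁ u ∂μ) * (∫ u, f₂ u * g₂ u ∂μ)
        - (∫ u, f₁ u * g₂ u ∂μ) * (∫ u, f₂ u * g₁ u ∂μ)) := by
  have expand (z : α × α) :
      (f₁ z.1 * f₂ z.2 - f₁ z.2 * f₂ z.1) * (g₁ z.1 * g₂ z.2 - g₁ z.2 * g₂ z.1) =
        (f₁ z.1 * g₁ z.1) * (f₂ z.2 * g₂ z.2) + (f₂ z.1 * g₂ z.1) * (f₁ z.2 * g₁ z.2)
          - ((f₁ z.1 * g₂ z.1) * (f₂ z.2 * g₁ z.2) + (f₂ z.1 * g₁ z.1) * (f₁ z.2 * g₂ z.2)) := by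
    ring
  simp_rw [expand]
  rw [integral_sub ((h₁₁.mul_prod h₂₂).fun_add (h₂₂.mul_prod h₁₁))
      ((h₁₂.mul_prod h₂₁).fun_add (h₂₁.mul_prod h₁₂)),
    integral_add (h₁₁.mul_prod h₂₂) (h₂₂.mul_prod h₁₁),
    integral_add (h₁₂.mul_prod h₂₁) (h₂₁.mul_prod h₁₂)]
  simp only [integral_prod_mul (fun u => f₁ u * g₁ u) (fun u => f₂ u * g₂ u),
    integral_prod_mul (fun u => f₂ u * g₂ u) (fun u => f₁ u * g₁ u),
    integral_prod_mul (fun u => f₁ u * g₂ u) (fun u => f₂ u * g₁ u),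
    integral_prod_mul (fun u => f₂ u * g₁ u) (fun u => f₁ u * g₂ u)]
  ring

theorem MonotoneRatioOn.setIntegral_mul_setIntegral_le [LinearOrder α] {f₁ f₂ g₁ g₂ : α → ℝ}
    {A : Set α} (hA : MeasurableSet A)
    (hf : MonotoneRatioOn f₁ f₂ A) (hg : MonotoneRatioOn g₁ g₂ A)
    (h₁₁ : IntegrableOn (fun u => f₁ u * g₁ u) A μ) (h₁₂ : IntegrableOn (fun u => f₁ u * g₂ u) A μ)
    (h₂₁ : IntegrableOn (fun u => f₂ u * g₁ u) A μ)
    (h₂₂ : IntegrableOn (fun u => f₂ u * g₂ u) A μ) :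
    (∫ u in A, f₁ u * g₂ u ∂μ) * (∫ u in A, f₂ u * g₁ u ∂μ) ≤
      (∫ u in A, f₁ u * g₁ u ∂μ) * (∫ u in A, f₂ u * g₂ u ∂μ) := by
  have minors_nonneg : 0 ≤ ∫ z : α × α,
      (f₁ z.1 * f₂ z.2 - f₁ z.2 * f₂ z.1) * (g₁ z.1 * g₂ z.2 - g₁ z.2 * g₂ z.1)
        ∂(μ.restrict A).prod (μ.restrict A) := by
    rw [Measure.prod_restrict]
    exact setIntegral_nonneg (hA.prod hA) fun z hz => hf.minor_mul_minor_nonneg hg hz.1 hz.2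
  rw [integral_prod_minor_mul_minor h₁₁ h₁₂ h₂₁ h₂₂] at minors_nonneg
  linarith

end Integral

theorem setIntegral_pos_of_forall_pos {α : Type*} [MeasurableSpace α] {μ : Measure α}
    {f : α → ℝ} {A : Set α} (hA : MeasurableSet A) (hμA : μ A ≠ 0)
    (hf : IntegrableOn f A μ) (hpos : ∀ u ∈ A, 0 < f u) :
    0 < ∫ u in A, f u ∂μ := by
  have hnonneg : 0 ≤ᵐ[μ.restrict A] f := ae_restrict_of_forall_mem hA fun u hu => (hpos u hu).le
  have hsupport : A ⊆ Function.support f := fun u hu => (hpos u hu).ne'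
  rw [setIntegral_pos_iff_support_of_nonneg_ae hnonneg hf, inter_eq_right.2 hsupport]
  exact pos_iff_ne_zero.2 hμA

theorem quotient_integral_rpow_kernel_monotone_general {μ : Measure ℝ} [SFinite μ] {A I : Set ℝ}
    (hA : MeasurableSet A) (hμA : μ A ≠ 0) (hI : I ⊆ Ioi 0) {ψ φ : ℝ → ℝ}
    (hφpos : ∀ υ ∈ A, 0 < φ υ) (hratio : MonotoneOn (fun υ => ψ υ / φ υ) A)
    (hψint : ∀ s ∈ I, IntegrableOn (fun υ => ψ υ * s ^ υ) A μ)
    (hφint : ∀ s ∈ I, IntegrableOn (fun υ => φ υ * s ^ υ) A μ) :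
    MonotoneOn (fun s => (∫ υ in A, ψ υ * s ^ υ ∂μ) / (∫ υ in A, φ υ * s ^ υ ∂μ)) I := by
  have denominator_pos : ∀ s ∈ I, 0 < ∫ υ in A, φ υ * s ^ υ ∂μ := fun s hs =>
    setIntegral_pos_of_forall_pos hA hμA (hφint s hs) fun υ hυ =>
      mul_pos (hφpos υ hυ) (Real.rpow_pos_of_pos (hI hs) υ)
  have hφψ : MonotoneRatioOn φ ψ A := (monotoneRatioOn_iff_monotoneOn_div hφpos).2 hratio
  refine (monotoneRatioOn_iff_monotoneOn_div denominator_pos).1 fun s hs t ht hst => ?_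
  exact hφψ.setIntegral_mul_setIntegral_le hA (monotoneRatioOn_rpow (hI hs) hst A)
    (hφint s hs) (hφint t ht) (hψint s hs) (hψint t ht)

theorem quotient_integral_rpow_kernel_monotone
    (a b : ℝ) (ha : 0 < a) (hab : a < b) (ψ φ : ℝ → ℝ)
    (hψm : Measurable ψ) (hφm : Measurable φ)
    (hφpos : ∀ υ : ℝ, 0 ≤ υ → 0 < φ υ)
    (hratio : MonotoneOn (fun υ => ψ υ / φ υ) (Ici (0 : ℝ)))
    (hψint : ∀ s ∈ Ioo a b, IntegrableOn (fun υ => ψ υ * s ^ υ) (Ici (0 : ℝ)) volume)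
    (hφint : ∀ s ∈ Ioo a b, IntegrableOn (fun υ => φ υ * s ^ υ) (Ici (0 : ℝ)) volume) :
    MonotoneOn
      (fun s => (∫ υ in Ici (0 : ℝ), ψ υ * s ^ υ) / (∫ υ in Ici (0 : ℝ), φ υ * s ^ υ))
      (Ioo a b) :=
  quotient_integral_rpow_kernel_monotone_general measurableSet_Ici (by simp)
    (fun _ hs => ha.trans hs.1) hφpos hratio hψint hφint
end

section
/- Let q > 1, let r > 0, and let (a_n)_{n∈ℕ}, (b_n)_{n∈ℕ} be real sequences with b_n > 0 for all n, such that n ↦ a_n/b_n is increasing. Suppose the series Ψ(s) = ∑_{n=0}^∞ (q−1) q^n a_n s^{q^n} and Φ(s) = ∑_{n=0}^∞ (q−1) q^n b_n s^{q^n} converge for every s ∈ (0,r). Then the function s ↦ Ψ(s)/Φ(s) is increasing on (0,r). -/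
/-!
Fix `x ≤ y` and write `Ψ`, `Φ` for the series `∑ w i * a i * s ^ t i`, `∑ w i * b i * s ^ t i`. With
`W i = w i * b i * x ^ t i`, `f i = a i / b i` and `g i = (y / x) ^ t i`, the values `Ψ x`, `Φ x`,
`Ψ y`, `Φ y` are the sums of `W * f`, `W`, `W * f * g`, `W * g`, and `f`, `g` vary in the same
direction because `1 ≤ y / x`. After clearing denominators, the claim is therefore Chebyshev's sum
inequality for `f` and `g` with the weights `W`.
-/

section Chebyshev

variable {ι R : Type*} [CommRing R]

theorem sum_sum_mul_sub_mul_sub (s : Finset ι) (w f g : ι → R) :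
    ∑ i ∈ s, ∑ j ∈ s, w i * w j * ((f j - f i) * (g j - g i)) =
      2 * ((∑ i ∈ s, w i) * (∑ i ∈ s, w i * f i * g i) -
        (∑ i ∈ s, w i * f i) * (∑ i ∈ s, w i * g i)) := by
  have expand (i j : ι) : w i * w j * ((f j - f i) * (g j - g i)) =
      w i * (w j * f j * g j) - w i * f i * (w j * g j) - w i * g i * (w j * f j) +
        w i * f i * g i * w j := by
    ring
  simp only [expand, Finset.sum_add_distrib, Finset.sum_sub_distrib, ← Finset.sum_mul_sum]
  ring

variable [LinearOrder R] [IsStrictOrderedRing R] {w f g : ι → R}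

theorem sum_mul_mul_sum_mul_le_of_monovaryOn {s : Finset ι} (hw : ∀ i ∈ s, 0 ≤ w i)
    (hfg : MonovaryOn f g s) :
    (∑ i ∈ s, w i * f i) * (∑ i ∈ s, w i * g i) ≤
      (∑ i ∈ s, w i) * (∑ i ∈ s, w i * f i * g i) := by
  have nonneg : 0 ≤ ∑ i ∈ s, ∑ j ∈ s, w i * w j * ((f j - f i) * (g j - g i)) :=
    Finset.sum_nonneg fun i hi ↦ Finset.sum_nonneg fun j hj ↦
      mul_nonneg (mul_nonneg (hw i hi) (hw j hj)) (hfg.sub_mul_sub_nonneg hi hj)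
  rw [sum_sum_mul_sub_mul_sub] at nonneg
  linarith

theorem tsum_mul_mul_tsum_mul_le_of_monovary [TopologicalSpace R] [OrderClosedTopology R]
    [ContinuousMul R] (hw : ∀ i, 0 ≤ w i) (hfg : Monovary f g) (hsum : Summable w)
    (hsum_f : Summable fun i ↦ w i * f i) (hsum_g : Summable fun i ↦ w i * g i)
    (hsum_fg : Summable fun i ↦ w i * f i * g i) :
    (∑' i, w i * f i) * (∑' i, w i * g i) ≤ (∑' i, w i) * (∑' i, w i * f i * g i) :=
  le_of_tendsto_of_tendsto' (Filter.Tendsto.mul hsum_f.hasSum hsum_g.hasSum)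
    (Filter.Tendsto.mul hsum.hasSum hsum_fg.hasSum)
    fun s ↦ sum_mul_mul_sum_mul_le_of_monovaryOn (fun i _ ↦ hw i) (hfg.monovaryOn (s : Set ι))

end Chebyshev

section Quotient

variable {ι : Type*} {t w a b : ι → ℝ}

theorem tsum_mul_mul_rpow_pos (hw : 0 < w) (hb : ∀ i, 0 < b i) {s : ℝ} (hs : 0 < s)
    (hsum : Summable fun i ↦ w i * b i * s ^ t i) : 0 < ∑' i, w i * b i * s ^ t i := by
  obtain ⟨w_nonneg, i, hi⟩ := Pi.lt_def.1 hw
  exact hsum.tsum_pos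
    (fun j ↦ mul_nonneg (mul_nonneg (w_nonneg j) (hb j).le) (Real.rpow_nonneg hs.le _)) i
    (mul_pos (mul_pos hi (hb i)) (Real.rpow_pos_of_pos hs _))

theorem tsum_rpow_mul_tsum_rpow_le (hw : 0 ≤ w) (hb : ∀ i, 0 < b i)
    (hab : Monovary (fun i ↦ a i / b i) t) {x y : ℝ} (hx : 0 < x) (hxy : x ≤ y)
    (hax : Summable fun i ↦ w i * a i * x ^ t i) (hbx : Summable fun i ↦ w i * b i * x ^ t i)
    (hay : Summable fun i ↦ w i * a i * y ^ t i) (hby : Summable fun i ↦ w i * b i * y ^ t i) :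
    (∑' i, w i * a i * x ^ t i) * (∑' i, w i * b i * y ^ t i) ≤
      (∑' i, w i * b i * x ^ t i) * (∑' i, w i * a i * y ^ t i) := by
  have rpow_y (i : ι) : y ^ t i = x ^ t i * (y / x) ^ t i := by
    rw [← Real.mul_rpow hx.le (div_nonneg (hx.le.trans hxy) hx.le), mul_div_cancel₀ _ hx.ne']
  have a_eq (i : ι) : w i * a i * x ^ t i = w i * b i * x ^ t i * (a i / b i) := by
    field_simp [(hb i).ne']
  have weight_nonneg (i : ι) : 0 ≤ w i * b i * x ^ t i :=
    mul_nonneg (mul_nonneg (hw i) (hb i).le) (Real.rpow_nonneg hx.le _)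
  have monovary_rpow : Monovary (fun i ↦ a i / b i) fun i ↦ (y / x) ^ t i :=
    (hab.symm.comp_monotone_left
      (Real.monotone_rpow_of_base_ge_one ((one_le_div hx).2 hxy))).symm
  simp only [rpow_y, ← mul_assoc, a_eq] at hax hay hby ⊢
  exact tsum_mul_mul_tsum_mul_le_of_monovary weight_nonneg monovary_rpow hbx hax hby hay

/-- For a discrete time scale with points `t i` and graininess `w i`, the two series are the Delta
integrals `∫ ψ(υ) s ^ υ Δυ` and `∫ φ(υ) s ^ υ Δυ` with `a i = ψ(t i)` and `b i = φ(t i)`.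
The order in `0 < w` is that of functions: `w` is nonnegative and not identically zero. -/
theorem quotient_q_series_monotone_general (hw : 0 < w) (hb : ∀ i, 0 < b i)
    (hab : Monovary (fun i ↦ a i / b i) t) {S : Set ℝ} (hS : S ⊆ Set.Ioi 0)
    (hasum : ∀ s ∈ S, Summable fun i ↦ w i * a i * s ^ t i)
    (hbsum : ∀ s ∈ S, Summable fun i ↦ w i * b i * s ^ t i) :
    MonotoneOn (fun s ↦ (∑' i, w i * a i * s ^ t i) / ∑' i, w i * b i * s ^ t i) S := by
  intro x hx y hy hxy
  have pos (s : ℝ) (hs : s ∈ S) : 0 < ∑' i, w i * b i * s ^ t i :=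
    tsum_mul_mul_rpow_pos hw hb (hS hs) (hbsum s hs)
  refine (div_le_div_iff₀ (pos x hx) (pos y hy)).2 ?_
  rw [mul_comm (∑' i, w i * a i * y ^ t i)]
  exact tsum_rpow_mul_tsum_rpow_le hw.le hb hab (hS hx) hxy
    (hasum x hx) (hbsum x hx) (hasum y hy) (hbsum y hy)

end Quotient

theorem quotient_q_series_monotone
    (q : ℝ) (hq : 1 < q) (r : ℝ) (hr : 0 < r)
    (a b : ℕ → ℝ) (hbpos : ∀ n, 0 < b n)
    (hratio : Monotone fun n => a n / b n)
    (hasum : ∀ s ∈ Set.Ioo (0 : ℝ) r,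
      Summable fun n : ℕ => (q - 1) * q ^ n * a n * s ^ (q ^ n))
    (hbsum : ∀ s ∈ Set.Ioo (0 : ℝ) r,
      Summable fun n : ℕ => (q - 1) * q ^ n * b n * s ^ (q ^ n)) :
    MonotoneOn
      (fun s => (∑' n : ℕ, (q - 1) * q ^ n * a n * s ^ (q ^ n)) /
        (∑' n : ℕ, (q - 1) * q ^ n * b n * s ^ (q ^ n)))
      (Set.Ioo (0 : ℝ) r) := by
  have weight_pos (n : ℕ) : 0 < (q - 1) * q ^ n :=
    mul_pos (sub_pos.2 hq) (pow_pos (zero_lt_one.trans hq) n)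
  exact quotient_q_series_monotone_general (lt_of_strongLT weight_pos) hbpos
    (hratio.monovary (pow_right_mono₀ hq.le)) Set.Ioo_subset_Ioi_self hasum hbsum
end

section
/- Let r > 0, let m ≥ 1, and for each l ∈ {1,…,m} let (ψ_l(n))_{n∈ℕ} and (φ_l(n))_{n∈ℕ} be real sequences with φ_l(n) > 0 for all n, such that n ↦ ψ_l(n)/φ_l(n) is increasing and ψ_l(n) > 0 for all n. Suppose that for every s ∈ (0,r) and every l the power series ∑_{n=0}^∞ ψ_l(n) s^n and ∑_{n=0}^∞ φ_l(n) s^n converge. Then the function s ↦ (∏_{l=1}^m ∑_{n=0}^∞ ψ_l(n) s^n) / (∏_{l=1}^m ∑_{n=0}^∞ φ_l(n) s^n) is increasing on (0,r). -/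
/-!
For a pair of weights whose quotient `ψ / φ` is increasing and a pair of kernels whose quotient
`K t / K s` is increasing, the Cauchy–Binet formula writes the difference of
`(∑ ψ K t) (∑ φ K s)` and `(∑ ψ K s) (∑ φ K t)` as half a double sum of products of two `2 × 2`
minors. Both minors change sign together when the summation indices are swapped, so every term is
nonnegative. Hence each quotient `(∑ ψ K s) / (∑ φ K s)` is increasing in `s`, and so is a product
of nonnegative ones. For power series the kernel is `K s n = s ^ n`.
-/

theorem hasSum_minor_mul_minor {ι R : Type*} [CommRing R] [TopologicalSpace R]
    [IsTopologicalRing R] [T3Space R] {f g a b : ι → R} {fa fb ga gb : R}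
    (hfa : HasSum (fun i => f i * a i) fa) (hfb : HasSum (fun i => f i * b i) fb)
    (hga : HasSum (fun i => g i * a i) ga) (hgb : HasSum (fun i => g i * b i) gb)
    (hfagb : Summable fun p : ι × ι => f p.1 * a p.1 * (g p.2 * b p.2))
    (hfbga : Summable fun p : ι × ι => f p.1 * b p.1 * (g p.2 * a p.2)) :
    HasSum (fun p : ι × ι =>
        (f p.1 * g p.2 - f p.2 * g p.1) * (a p.1 * b p.2 - a p.2 * b p.1))
      (2 * (fa * gb - fb * ga)) := by
  have difference := (hfa.mul hgb hfagb).sub (hfb.mul hga hfbga)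
  have swapped := (Equiv.prodComm ι ι).hasSum_iff.2 difference
  rw [two_mul]
  refine (difference.add swapped).congr_fun fun p => ?_
  simp only [Function.comp_apply, Equiv.prodComm_apply, Prod.fst_swap, Prod.snd_swap]
  ring

/-- The likelihood ratio order `g ≤ f`: the quotient `f / g` is increasing. It is written without
division, so that `g` may vanish. -/
def LikelihoodRatioLE {ι R : Type*} [LE ι] [Mul R] [LE R] (g f : ι → R) : Prop :=
  ∀ ⦃i j⦄, i ≤ j → f i * g j ≤ f j * g i

namespace LikelihoodRatioLE

theorem iff_monotone_div {ι R : Type*} [Preorder ι] [Field R] [LinearOrder R]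
    [IsStrictOrderedRing R] {g f : ι → R} (hg : ∀ i, 0 < g i) :
    LikelihoodRatioLE g f ↔ Monotone fun i => f i / g i := by
  simp only [LikelihoodRatioLE, Monotone, div_le_div_iff₀ (hg _) (hg _)]

theorem pow_of_nonneg_of_le {R : Type*} [CommSemiring R] [PartialOrder R] [IsOrderedRing R]
    {s t : R} (hs : 0 ≤ s) (hst : s ≤ t) :
    LikelihoodRatioLE (fun n : ℕ => s ^ n) (fun n => t ^ n) := by
  intro i j hij
  obtain ⟨k, rfl⟩ := Nat.exists_eq_add_of_le hij
  have ht : 0 ≤ t := hs.trans hst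
  calc t ^ i * s ^ (i + k) = t ^ i * s ^ i * s ^ k := by ring
    _ ≤ t ^ i * s ^ i * t ^ k := by gcongr
    _ = t ^ (i + k) * s ^ i := by ring

theorem minor_mul_minor_nonneg {ι R : Type*} [LinearOrder ι] [CommRing R] [PartialOrder R]
    [IsOrderedRing R] {f g a b : ι → R} (hgf : LikelihoodRatioLE g f)
    (hba : LikelihoodRatioLE b a) (i j : ι) :
    0 ≤ (f i * g j - f j * g i) * (a i * b j - a j * b i) := by
  rcases le_total i j with hij | hji
  · exact mul_nonneg_of_nonpos_of_nonpos (sub_nonpos.2 (hgf hij)) (sub_nonpos.2 (hba hij))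
  · exact mul_nonneg (sub_nonneg.2 (hgf hji)) (sub_nonneg.2 (hba hji))

theorem tsum_mul_tsum_le {ι : Type*} [LinearOrder ι] {f g a b : ι → ℝ}
    (hgf : LikelihoodRatioLE g f) (hba : LikelihoodRatioLE b a)
    (hfa : Summable fun i => f i * a i) (hfb : Summable fun i => f i * b i)
    (hga : Summable fun i => g i * a i) (hgb : Summable fun i => g i * b i) :
    (∑' i, f i * b i) * (∑' i, g i * a i) ≤ (∑' i, f i * a i) * (∑' i, g i * b i) := by
  have double_sum := hasSum_minor_mul_minor hfa.hasSum hfb.hasSum hga.hasSum hgb.hasSum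
    (summable_mul_of_summable_norm hfa.norm hgb.norm :)
    (summable_mul_of_summable_norm hfb.norm hga.norm :)
  have nonneg := double_sum.nonneg fun p : ι × ι =>
    (hgf.minor_mul_minor_nonneg hba p.1 p.2 :)
  linarith

theorem monotoneOn_tsum_div_tsum {α ι : Type*} [Preorder α] [LinearOrder ι] {D : Set α}
    {K : α → ι → ℝ} {ψ φ : ι → ℝ} (hφψ : LikelihoodRatioLE φ ψ)
    (hK : ∀ s ∈ D, ∀ t ∈ D, s ≤ t → LikelihoodRatioLE (K s) (K t))
    (hψsum : ∀ s ∈ D, Summable fun n => ψ n * K s n)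
    (hφsum : ∀ s ∈ D, Summable fun n => φ n * K s n)
    (hpos : ∀ s ∈ D, 0 < ∑' n, φ n * K s n) :
    MonotoneOn (fun s => (∑' n, ψ n * K s n) / ∑' n, φ n * K s n) D := fun s hs t ht hst =>
  (div_le_div_iff₀ (hpos s hs) (hpos t ht)).2 <|
    hφψ.tsum_mul_tsum_le (hK s hs t ht hst) (hψsum t ht) (hψsum s hs) (hφsum t ht) (hφsum s hs)

end LikelihoodRatioLE

theorem tsum_mul_pos_of_pos {ι : Type*} {φ k : ι → ℝ} (hφ : ∀ n, 0 < φ n) (hk : 0 < k)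
    (hsum : Summable fun n => φ n * k n) : 0 < ∑' n, φ n * k n := by
  obtain ⟨hk_nonneg, n, hn⟩ := Pi.lt_def.1 hk
  exact hsum.tsum_pos (fun i => mul_nonneg (hφ i).le (hk_nonneg i)) n (mul_pos (hφ n) hn)

-- In the pointwise order, `0 < K s` means that `K s` is nonnegative and not identically zero.
theorem quotient_product_power_series_monotone_general {α ι κ : Type*} [Preorder α]
    [LinearOrder ι] [Fintype κ] {D : Set α} {K : α → ι → ℝ} {ψ φ : κ → ι → ℝ}
    (hKpos : ∀ s ∈ D, 0 < K s)
    (hK : ∀ s ∈ D, ∀ t ∈ D, s ≤ t → LikelihoodRatioLE (K s) (K t))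
    (hψnonneg : ∀ l n, 0 ≤ ψ l n) (hφpos : ∀ l n, 0 < φ l n)
    (hratio : ∀ l, Monotone fun n => ψ l n / φ l n)
    (hψsum : ∀ s ∈ D, ∀ l, Summable fun n => ψ l n * K s n)
    (hφsum : ∀ s ∈ D, ∀ l, Summable fun n => φ l n * K s n) :
    MonotoneOn (fun s => (∏ l, ∑' n, ψ l n * K s n) / ∏ l, ∑' n, φ l n * K s n) D := by
  have numerator_nonneg (s) (hs : s ∈ D) (l) : 0 ≤ ∑' n, ψ l n * K s n :=
    tsum_nonneg fun n => mul_nonneg (hψnonneg l n) ((hKpos s hs).le n)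
  have denominator_pos (s) (hs : s ∈ D) (l) : 0 < ∑' n, φ l n * K s n :=
    tsum_mul_pos_of_pos (hφpos l) (hKpos s hs) (hφsum s hs l)
  have factor_monotone (l) : MonotoneOn (fun s => (∑' n, ψ l n * K s n) / ∑' n, φ l n * K s n) D :=
    ((LikelihoodRatioLE.iff_monotone_div (hφpos l)).2 (hratio l)).monotoneOn_tsum_div_tsum hK
      (fun s hs => hψsum s hs l) (fun s hs => hφsum s hs l) fun s hs => denominator_pos s hs l
  simp only [← Finset.prod_div_distrib]
  exact MonotoneOn.finsetProd (fun l _ => factor_monotone l)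
    fun l _ s hs => div_nonneg (numerator_nonneg s hs l) (denominator_pos s hs l).le

theorem quotient_product_power_series_monotone
    (r : ℝ) (hr : 0 < r) (m : ℕ) (hm : 1 ≤ m)
    (ψ φ : Fin m → ℕ → ℝ)
    (hψpos : ∀ l n, 0 < ψ l n) (hφpos : ∀ l n, 0 < φ l n)
    (hratio : ∀ l, Monotone fun n => ψ l n / φ l n)
    (hψsum : ∀ s ∈ Set.Ioo (0 : ℝ) r, ∀ l, Summable fun n => ψ l n * s ^ n)
    (hφsum : ∀ s ∈ Set.Ioo (0 : ℝ) r, ∀ l, Summable fun n => φ l n * s ^ n) :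
    MonotoneOn
      (fun s => (∏ l : Fin m, ∑' n : ℕ, ψ l n * s ^ n) /
        (∏ l : Fin m, ∑' n : ℕ, φ l n * s ^ n))
      (Set.Ioo (0 : ℝ) r) :=
  quotient_product_power_series_monotone_general
    (fun _ hs => Pi.lt_def.2 ⟨fun n => (pow_pos hs.1 n).le, 0, pow_pos hs.1 0⟩)
    (fun _ hs _ _ hst => LikelihoodRatioLE.pow_of_nonneg_of_le hs.1.le hst)
    (fun l n => (hψpos l n).le) hφpos hratio hψsum hφsum
end

section
/- Let α < β be real numbers, let ψ, φ : [α,β] → ℝ be continuous with φ(υ) > 0 for all υ ∈ [α,β] and with υ ↦ ψ(υ)/φ(υ) increasing on [α,β]. Let w : ℝ × [α,β] → (0,∞) be continuous such that the partial derivative ∂w/∂s exists and is continuous on ℝ × [α,β], and such that for every s ∈ ℝ the function υ ↦ (∂w/∂s)(s,υ) / w(s,υ) is increasing on [α,β]. Then the function s ↦ (∫_α^β ψ(υ) w(s,υ) dυ) / (∫_α^β φ(υ) w(s,υ) dυ) is increasing on ℝ. -/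
open MeasureTheory Set intervalIntegral

/-!
For `s ≤ t`, comparing the two quotients amounts to a Chebyshev inequality for `ψ / φ` and
`w t / w s` under the weight `φ * w s`, which holds because both ratios are increasing.
That `w t / w s` is increasing follows by exchanging the roles of the two variables: for `x ≤ y`
the ratio `w r y / w r x` is increasing in `r`, since its logarithmic derivative
`ws r y / w r y - ws r x / w r x` is nonnegative.
-/

section Integral

variable {X : Type*} [MeasurableSpace X] {μ : Measure X} {f g h k : X → ℝ}

/-- The two-function case of the Andréief (basic composition) identity. -/
theorem integral_integral_sub_mul_sub
    (hfh : Integrable (fun x => f x * h x) μ) (hfk : Integrable (fun x => f x * k x) μ)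
    (hgh : Integrable (fun x => g x * h x) μ) (hgk : Integrable (fun x => g x * k x) μ) :
    ∫ x, ∫ y, (f x * g y - f y * g x) * (h x * k y - h y * k x) ∂μ ∂μ =
      2 * ((∫ x, g x * k x ∂μ) * (∫ x, f x * h x ∂μ) -
        (∫ x, f x * k x ∂μ) * (∫ x, g x * h x ∂μ)) := by
  have integral_linear_comb (a b c d : ℝ) :
      ∫ x, (a * (f x * h x) - b * (f x * k x) - (c * (g x * h x) - d * (g x * k x))) ∂μ =
        a * (∫ x, f x * h x ∂μ) - b * (∫ x, f x * k x ∂μ) -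
          (c * (∫ x, g x * h x ∂μ) - d * (∫ x, g x * k x ∂μ)) := by
    have hf : Integrable (fun x => a * (f x * h x) - b * (f x * k x)) μ :=
      (hfh.const_mul a).sub (hfk.const_mul b)
    have hg : Integrable (fun x => c * (g x * h x) - d * (g x * k x)) μ :=
      (hgh.const_mul c).sub (hgk.const_mul d)
    rw [MeasureTheory.integral_sub hf hg,
      MeasureTheory.integral_sub (hfh.const_mul a) (hfk.const_mul b),
      MeasureTheory.integral_sub (hgh.const_mul c) (hgk.const_mul d)]
    simp only [MeasureTheory.integral_const_mul]
  have inner_integral (x : X) : ∫ y, (f x * g y - f y * g x) * (h x * k y - h y * k x) ∂μ =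
      (∫ y, g y * k y ∂μ) * (f x * h x) - (∫ y, g y * h y ∂μ) * (f x * k x) -
        ((∫ y, f y * k y ∂μ) * (g x * h x) - (∫ y, f y * h y ∂μ) * (g x * k x)) := by
    calc
      _ = ∫ y, ((g x * k x) * (f y * h y) - (g x * h x) * (f y * k y) -
            ((f x * k x) * (g y * h y) - (f x * h x) * (g y * k y))) ∂μ := by
        congr 1 with y
        ring
      _ = _ := by rw [integral_linear_comb]; ring
  simp only [inner_integral]
  rw [integral_linear_comb]
  ring

theorem setIntegral_mul_setIntegral_le_of_monovaryOn_div {S : Set X} (hS : MeasurableSet S)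
    (hg : ∀ x ∈ S, 0 < g x) (hk : ∀ x ∈ S, 0 < k x)
    (hmono : MonovaryOn (fun x => f x / g x) (fun x => h x / k x) S)
    (hfh : IntegrableOn (fun x => f x * h x) S μ) (hfk : IntegrableOn (fun x => f x * k x) S μ)
    (hgh : IntegrableOn (fun x => g x * h x) S μ) (hgk : IntegrableOn (fun x => g x * k x) S μ) :
    (∫ x in S, f x * k x ∂μ) * (∫ x in S, g x * h x ∂μ) ≤
      (∫ x in S, g x * k x ∂μ) * (∫ x in S, f x * h x ∂μ) := by
  have integrand_nonneg : ∀ x ∈ S, ∀ y ∈ S,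
      0 ≤ (f x * g y - f y * g x) * (h x * k y - h y * k x) := by
    intro x hx y hy
    have := hg x hx
    have := hg y hy
    have := hk x hx
    have := hk y hy
    calc 0 ≤ (g x * g y * (k x * k y)) *
          ((f x / g x - f y / g y) * (h x / k x - h y / k y)) :=
          mul_nonneg (by positivity) (monovaryOn_iff_forall_mul_nonneg.1 hmono hy hx)
      _ = (f x * g y - f y * g x) * (h x * k y - h y * k x) := by field_simp
  have double_integral_nonneg : 0 ≤ ∫ x in S, ∫ y in S,
      (f x * g y - f y * g x) * (h x * k y - h y * k x) ∂μ ∂μ :=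
    setIntegral_nonneg hS fun x hx => setIntegral_nonneg hS (integrand_nonneg x hx)
  rw [integral_integral_sub_mul_sub hfh hfk hgh hgk] at double_integral_nonneg
  linarith

theorem setIntegral_pos_of_pos {S : Set X} (hS : MeasurableSet S) (hμS : μ S ≠ 0)
    (hf : IntegrableOn f S μ) (hpos : ∀ x ∈ S, 0 < f x) : 0 < ∫ x in S, f x ∂μ := by
  have hsupport : Function.support f ∩ S = S :=
    inter_eq_right.2 fun x hx => (hpos x hx).ne'
  rw [setIntegral_pos_iff_support_of_nonneg_ae
    (ae_restrict_of_forall_mem hS fun x hx => (hpos x hx).le) hf, hsupport]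
  exact hμS.bot_lt

end Integral

theorem monotoneOn_div_of_logDeriv_le {J : Set ℝ} (hJ : Convex ℝ J) {a a' b b' : ℝ → ℝ}
    (ha : ∀ s ∈ J, 0 < a s) (hb : ∀ s ∈ J, 0 < b s)
    (ha' : ∀ s ∈ J, HasDerivWithinAt a (a' s) J s)
    (hb' : ∀ s ∈ J, HasDerivWithinAt b (b' s) J s)
    (hle : ∀ s ∈ J, a' s / a s ≤ b' s / b s) :
    MonotoneOn (fun s => b s / a s) J := by
  have hderiv : ∀ s ∈ J, HasDerivWithinAt (fun s => b s / a s)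
      ((b' s * a s - b s * a' s) / a s ^ 2) J s :=
    fun s hs => (hb' s hs).fun_div (ha' s hs) (ha s hs).ne'
  refine monotoneOn_of_hasDerivWithinAt_nonneg hJ
    (fun s hs => (hderiv s hs).continuousWithinAt)
    (fun s hs => (hderiv s (interior_subset hs)).mono interior_subset) fun s hs => ?_
  have hs := interior_subset hs
  have hcross := (div_le_div_iff₀ (ha s hs) (hb s hs)).1 (hle s hs)
  exact div_nonneg (by linarith) (sq_nonneg _)

theorem monotoneOn_div_of_monotoneOn_logDeriv {X : Type*} [Preorder X] {S : Set X} {J : Set ℝ}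
    (hJ : Convex ℝ J) {w ws : ℝ → X → ℝ} (hw : ∀ s ∈ J, ∀ x ∈ S, 0 < w s x)
    (hws : ∀ s ∈ J, ∀ x ∈ S, HasDerivWithinAt (fun r => w r x) (ws s x) J s)
    (hlog : ∀ s ∈ J, MonotoneOn (fun x => ws s x / w s x) S)
    {s t : ℝ} (hs : s ∈ J) (ht : t ∈ J) (hst : s ≤ t) :
    MonotoneOn (fun x => w t x / w s x) S := by
  intro x hx y hy hxy
  have hcross : w s y / w s x ≤ w t y / w t x :=
    monotoneOn_div_of_logDeriv_le hJ (fun r hr => hw r hr x hx) (fun r hr => hw r hr y hy)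
      (fun r hr => hws r hr x hx) (fun r hr => hws r hr y hy)
      (fun r hr => hlog r hr hx hy hxy) hs ht hst
  rw [div_le_div_iff₀ (hw s hs x hx) (hw t ht x hx)] at hcross
  exact (div_le_div_iff₀ (hw s hs x hx) (hw s hs y hy)).2 (by linarith)

theorem quotient_parameter_integral_monotone_general
    {X : Type*} [LinearOrder X] [MeasurableSpace X] {μ : Measure X}
    {S : Set X} (hS : MeasurableSet S) (hμS : μ S ≠ 0) {J : Set ℝ} (hJ : Convex ℝ J)
    {ψ φ : X → ℝ} {w ws : ℝ → X → ℝ}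
    (hψw : ∀ s ∈ J, IntegrableOn (fun x => ψ x * w s x) S μ)
    (hφw : ∀ s ∈ J, IntegrableOn (fun x => φ x * w s x) S μ)
    (hφ : ∀ x ∈ S, 0 < φ x) (hratio : MonotoneOn (fun x => ψ x / φ x) S)
    (hw : ∀ s ∈ J, ∀ x ∈ S, 0 < w s x)
    (hws : ∀ s ∈ J, ∀ x ∈ S, HasDerivWithinAt (fun r => w r x) (ws s x) J s)
    (hlog : ∀ s ∈ J, MonotoneOn (fun x => ws s x / w s x) S) :
    MonotoneOn (fun s => (∫ x in S, ψ x * w s x ∂μ) / (∫ x in S, φ x * w s x ∂μ)) J := by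
  intro s hs t ht hst
  have denom_pos : ∀ r ∈ J, 0 < ∫ x in S, φ x * w r x ∂μ := fun r hr =>
    setIntegral_pos_of_pos hS hμS (hφw r hr) fun x hx => mul_pos (hφ x hx) (hw r hr x hx)
  have hmono : MonovaryOn (fun x => ψ x / φ x) (fun x => w t x / w s x) S :=
    hratio.monovaryOn (monotoneOn_div_of_monotoneOn_logDeriv hJ hw hws hlog hs ht hst)
  refine (div_le_div_iff₀ (denom_pos s hs) (denom_pos t ht)).2 ?_
  rw [mul_comm (∫ x in S, ψ x * w t x ∂μ)]
  exact setIntegral_mul_setIntegral_le_of_monovaryOn_div hS hφ (hw s hs) hmono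
    (hψw t ht) (hψw s hs) (hφw t ht) (hφw s hs)

theorem quotient_parameter_integral_monotone
    (α β : ℝ) (hαβ : α < β) (ψ φ : ℝ → ℝ) (w ws : ℝ → ℝ → ℝ)
    (hψc : ContinuousOn ψ (Icc α β))
    (hφc : ContinuousOn φ (Icc α β))
    (hφpos : ∀ υ ∈ Icc α β, 0 < φ υ)
    (hratio : MonotoneOn (fun υ => ψ υ / φ υ) (Icc α β))
    (hwpos : ∀ s : ℝ, ∀ υ ∈ Icc α β, 0 < w s υ)
    (hwc : ContinuousOn (fun p : ℝ × ℝ => w p.1 p.2) (univ ×ˢ Icc α β))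
    (hwderiv : ∀ s : ℝ, ∀ υ ∈ Icc α β, HasDerivAt (fun t => w t υ) (ws s υ) s)
    (hwsc : ContinuousOn (fun p : ℝ × ℝ => ws p.1 p.2) (univ ×ˢ Icc α β))
    (hlogmono : ∀ s : ℝ, MonotoneOn (fun υ => ws s υ / w s υ) (Icc α β)) :
    Monotone fun s =>
      (∫ υ in α..β, ψ υ * w s υ) / (∫ υ in α..β, φ υ * w s υ) := by
  have hw_slice (s : ℝ) : ContinuousOn (w s) (Icc α β) := hwc.uncurry_left s (mem_univ s)
  have hvol : volume (Icc α β) ≠ 0 := by simp [hαβ]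
  simp only [integral_of_le hαβ.le, ← integral_Icc_eq_integral_Ioc, ← monotoneOn_univ]
  exact quotient_parameter_integral_monotone_general measurableSet_Icc hvol convex_univ
    (fun s _ => (hψc.mul (hw_slice s)).integrableOn_Icc)
    (fun s _ => (hφc.mul (hw_slice s)).integrableOn_Icc) hφpos hratio (fun s _ => hwpos s)
    (fun s _ υ hυ => (hwderiv s υ hυ).hasDerivWithinAt) (fun s _ => hlogmono s)
end

section
/- Let ψ, φ : ℕ → ℝ be sequences with φ(n) > 0 for all n and with n ↦ ψ(n)/φ(n) increasing on ℕ. Let w : ℝ × ℕ → (0,∞) be such that for each n the map s ↦ w(s,n) is differentiable on ℝ, and for every s ∈ ℝ the map n ↦ (∂w/∂s)(s,n) / w(s,n) is increasing on ℕ. Suppose that for every s ∈ ℝ the series Ψ(s) = ∑_{n=0}^∞ ψ(n) w(s,n) and Φ(s) = ∑_{n=0}^∞ φ(n) w(s,n) converge, that s ↦ Ψ(s) and s ↦ Φ(s) are differentiable with Ψ′(s) = ∑_{n=0}^∞ ψ(n) (∂w/∂s)(s,n) and Φ′(s) = ∑_{n=0}^∞ φ(n) (∂w/∂s)(s,n)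 (all four series converging absolutely). Then the function s ↦ Ψ(s)/Φ(s) is increasing on ℝ. -/
/-!
Integrating `f x * g y + g x * f y ≤ f x * g x + f y * g y` against `p x * p y` gives Chebyshev's
inequality `(∫ f p) (∫ g p) ≤ (∫ f g p) (∫ p)`. With `p = φ u`, `f = ψ / φ` and `g = v / u` it
reads `(∫ ψ u) (∫ φ v) ≤ (∫ ψ v) (∫ φ u)`. For `u = w(s, ·)` and `v = ∂w/∂s (s, ·)` this says that
the numerator `Ψ' Φ - Ψ Φ'` of the derivative of `Ψ / Φ` is nonnegative. Series are integrals
against the counting measure.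
-/

open MeasureTheory Set

variable {α : Type*} [MeasurableSpace α] {μ : Measure α}

theorem sigmaFinite_of_integrable_of_ae_ne_zero {E : Type*} [NormedAddCommGroup E] {f : α → E}
    (hf_int : Integrable f μ) (hf : ∀ᵐ x ∂μ, f x ≠ 0) : SigmaFinite μ := by
  obtain ⟨t, ht, hf_zero, ht_sigma⟩ := hf_int.aefinStronglyMeasurable.exists_set_sigmaFinite
  have hμt : ∀ᵐ x ∂μ, x ∈ t := by
    filter_upwards [hf, (ae_restrict_iff' ht.compl).1 hf_zero] with x hx hx_zero
    exact not_not.1 fun hxt => hx (hx_zero hxt)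
  rwa [Measure.restrict_eq_self_of_ae_mem hμt] at ht_sigma

theorem integral_prod_mul_add_mul {β 𝕜 : Type*} [MeasurableSpace β] {ν : Measure β} [SFinite μ]
    [SFinite ν] [RCLike 𝕜] {a c : α → 𝕜} {b d : β → 𝕜} (ha : Integrable a μ)
    (hb : Integrable b ν) (hc : Integrable c μ) (hd : Integrable d ν) :
    ∫ z, a z.1 * b z.2 + c z.1 * d z.2 ∂μ.prod ν =
      (∫ x, a x ∂μ) * (∫ y, b y ∂ν) + (∫ x, c x ∂μ) * ∫ y, d y ∂ν := by
  rw [integral_add (ha.mul_prod hb) (hc.mul_prod hd), integral_prod_mul, integral_prod_mul]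

theorem integral_mul_integral_le_of_monovary [SFinite μ] {f g p : α → ℝ} (hfg : Monovary f g)
    (hp : ∀ x, 0 ≤ p x) (hp_int : Integrable p μ)
    (hfp : Integrable (fun x => f x * p x) μ) (hgp : Integrable (fun x => g x * p x) μ)
    (hfgp : Integrable (fun x => f x * g x * p x) μ) :
    (∫ x, f x * p x ∂μ) * ∫ x, g x * p x ∂μ ≤ (∫ x, f x * g x * p x ∂μ) * ∫ x, p x ∂μ := by
  have pointwise (z : α × α) :
      f z.1 * p z.1 * (g z.2 * p z.2) + g z.1 * p z.1 * (f z.2 * p z.2) ≤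
        f z.1 * g z.1 * p z.1 * p z.2 + p z.1 * (f z.2 * g z.2 * p z.2) := by
    linear_combination
      mul_le_mul_of_nonneg_right (hfg.sub_mul_sub_nonneg z.1 z.2) (mul_nonneg (hp z.1) (hp z.2))
  have integrated :
      (∫ x, f x * p x ∂μ) * (∫ x, g x * p x ∂μ) + (∫ x, g x * p x ∂μ) * (∫ x, f x * p x ∂μ) ≤
        (∫ x, f x * g x * p x ∂μ) * (∫ x, p x ∂μ) +
          (∫ x, p x ∂μ) * (∫ x, f x * g x * p x ∂μ) := by
    rw [← integral_prod_mul_add_mul hfp hgp hgp hfp,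
      ← integral_prod_mul_add_mul hfgp hp_int hp_int hfgp]
    exact integral_mono ((hfp.mul_prod hgp).add (hgp.mul_prod hfp))
      ((hfgp.mul_prod hp_int).add (hp_int.mul_prod hfgp)) pointwise
  linarith

theorem integral_mul_integral_le_of_monovary_div {ψ φ u v : α → ℝ}
    (hφ : ∀ x, 0 < φ x) (hu : ∀ x, 0 < u x)
    (hmono : Monovary (fun x => ψ x / φ x) fun x => v x / u x)
    (hψu : Integrable (fun x => ψ x * u x) μ) (hφu : Integrable (fun x => φ x * u x) μ)
    (hψv : Integrable (fun x => ψ x * v x) μ) (hφv : Integrable (fun x => φ x * v x) μ) :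
    (∫ x, ψ x * u x ∂μ) * ∫ x, φ x * v x ∂μ ≤ (∫ x, ψ x * v x ∂μ) * ∫ x, φ x * u x ∂μ := by
  have eq_ψu (x : α) : ψ x * u x = ψ x / φ x * (φ x * u x) := by
    field_simp [(hφ x).ne']
  have eq_φv (x : α) : φ x * v x = v x / u x * (φ x * u x) := by
    field_simp [(hu x).ne']
  have eq_ψv (x : α) : ψ x * v x = ψ x / φ x * (v x / u x) * (φ x * u x) := by
    field_simp [(hφ x).ne', (hu x).ne']
  have : SigmaFinite μ := sigmaFinite_of_integrable_of_ae_ne_zero hφu <|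
    .of_forall fun x => (mul_pos (hφ x) (hu x)).ne'
  simp only [eq_ψu, eq_φv, eq_ψv] at hψu hφv hψv ⊢
  exact integral_mul_integral_le_of_monovary hmono (fun x => (mul_pos (hφ x) (hu x)).le)
    hφu hψu hφv hψv

theorem integral_pos_of_forall_pos [NeZero μ] {f : α → ℝ} (hf : ∀ x, 0 < f x)
    (hf_int : Integrable f μ) : 0 < ∫ x, f x ∂μ := by
  have hsupp : Function.support f = univ := eq_univ_of_forall fun x => (hf x).ne'
  rw [integral_pos_iff_support_of_nonneg (fun x => (hf x).le) hf_int, hsupp]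
  exact NeZero.pos (μ univ)

theorem integral_count_eq_tsum {ι E : Type*} [MeasurableSpace ι] [MeasurableSingletonClass ι]
    [NormedAddCommGroup E] [NormedSpace ℝ E] [FiniteDimensional ℝ E] (f : ι → E) :
    ∫ i, f i ∂Measure.count = ∑' i, f i := by
  by_cases hf : Integrable f Measure.count
  · simp [Measure.count, integral_sum_measure hf]
  · have hf' : ¬Summable f := by rwa [← summable_norm_iff, ← integrable_count_iff]
    rw [integral_undef hf, tsum_eq_zero_of_not_summable hf']

theorem monotoneOn_div_of_mul_deriv_le {D : Set ℝ} (hD : Convex ℝ D) {f g f' g' : ℝ → ℝ}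
    (hf : ∀ s ∈ D, HasDerivWithinAt f (f' s) D s) (hg : ∀ s ∈ D, HasDerivWithinAt g (g' s) D s)
    (hg_ne : ∀ s ∈ D, g s ≠ 0) (hle : ∀ s ∈ D, f s * g' s ≤ f' s * g s) :
    MonotoneOn (fun s => f s / g s) D := by
  have hquot (s : ℝ) (hs : s ∈ D) := (hf s hs).fun_div (hg s hs) (hg_ne s hs)
  refine monotoneOn_of_hasDerivWithinAt_nonneg hD
    (fun s hs => (hquot s hs).continuousWithinAt)
    (fun s hs => (hquot s (interior_subset hs)).mono interior_subset) fun s hs => ?_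
  exact div_nonneg (sub_nonneg.2 (hle s (interior_subset hs))) (sq_nonneg _)

theorem quotient_parameter_series_monotone_general [NeZero μ] {D : Set ℝ} (hD : Convex ℝ D)
    {ψ φ : α → ℝ} {w ws : ℝ → α → ℝ}
    (hφpos : ∀ x, 0 < φ x) (hwpos : ∀ s ∈ D, ∀ x, 0 < w s x)
    (hwderiv : ∀ s ∈ D, ∀ x, HasDerivWithinAt (fun t => w t x) (ws s x) D s)
    (hmono : ∀ s ∈ D, Monovary (fun x => ψ x / φ x) fun x => ws s x / w s x)
    (hψw : ∀ s ∈ D, Integrable (fun x => ψ x * w s x) μ)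
    (hφw : ∀ s ∈ D, Integrable (fun x => φ x * w s x) μ)
    (hψws : ∀ s ∈ D, Integrable (fun x => ψ x * ws s x) μ)
    (hφws : ∀ s ∈ D, Integrable (fun x => φ x * ws s x) μ)
    (hΨderiv : ∀ s ∈ D,
      HasDerivWithinAt (fun t => ∫ x, ψ x * w t x ∂μ) (∫ x, ψ x * ws s x ∂μ) D s)
    (hΦderiv : ∀ s ∈ D,
      HasDerivWithinAt (fun t => ∫ x, φ x * w t x ∂μ) (∫ x, φ x * ws s x ∂μ) D s) :
    MonotoneOn (fun s => (∫ x, ψ x * w s x ∂μ) / ∫ x, φ x * w s x ∂μ) D := by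
  refine monotoneOn_div_of_mul_deriv_le hD hΨderiv hΦderiv (fun s hs => ?_) fun s hs => ?_
  · exact (integral_pos_of_forall_pos (fun x => mul_pos (hφpos x) (hwpos s hs x)) (hφw s hs)).ne'
  · exact integral_mul_integral_le_of_monovary_div hφpos (hwpos s hs) (hmono s hs)
      (hψw s hs) (hφw s hs) (hψws s hs) (hφws s hs)

theorem quotient_parameter_series_monotone
    (ψ φ : ℕ → ℝ) (w ws : ℝ → ℕ → ℝ)
    (hφpos : ∀ n, 0 < φ n)
    (hratio : Monotone fun n => ψ n / φ n)
    (hwpos : ∀ s n, 0 < w s n)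
    (hwderiv : ∀ (s : ℝ) (n : ℕ), HasDerivAt (fun t => w t n) (ws s n) s)
    (hlogmono : ∀ s : ℝ, Monotone fun n => ws s n / w s n)
    (hψw : ∀ s : ℝ, Summable fun n => |ψ n * w s n|)
    (hφw : ∀ s : ℝ, Summable fun n => |φ n * w s n|)
    (hψws : ∀ s : ℝ, Summable fun n => |ψ n * ws s n|)
    (hφws : ∀ s : ℝ, Summable fun n => |φ n * ws s n|)
    (hΨderiv : ∀ s : ℝ,
      HasDerivAt (fun t => ∑' n : ℕ, ψ n * w t n) (∑' n : ℕ, ψ n * ws s n) s)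
    (hΦderiv : ∀ s : ℝ,
      HasDerivAt (fun t => ∑' n : ℕ, φ n * w t n) (∑' n : ℕ, φ n * ws s n) s) :
    Monotone fun s => (∑' n : ℕ, ψ n * w s n) / (∑' n : ℕ, φ n * w s n) := by
  simp only [← Real.norm_eq_abs, ← integrable_count_iff] at hψw hφw hψws hφws
  simp only [← integral_count_eq_tsum] at hΨderiv hΦderiv ⊢
  rw [← monotoneOn_univ]
  exact quotient_parameter_series_monotone_general convex_univ hφpos (fun s _ => hwpos s)
    (fun s _ n => (hwderiv s n).hasDerivWithinAt) (fun s _ => hratio.monovary (hlogmono s))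
    (fun s _ => hψw s) (fun s _ => hφw s) (fun s _ => hψws s) (fun s _ => hφws s)
    (fun s _ => (hΨderiv s).hasDerivWithinAt) fun s _ => (hΦderiv s).hasDerivWithinAt
end

section
/- Let (ψ_u)_{u∈ℕ} and (φ_u)_{u∈ℕ} be real sequences with φ_u > 0 for all u, such that u ↦ ψ_u/φ_u is increasing. For n ∈ ℕ define Ψ(n) = ∑_{u=0}^{n} ψ_u · n!/(n−u)! and Φ(n) = ∑_{u=0}^{n} φ_u · n!/(n−u)! (where n!/(n−u)! = n(n−1)⋯(n−u+1) is the descending factorial). Then the function n ↦ Ψ(n)/Φ(n) is increasing on ℕ. -/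
/-!
For weights `a u = n(n-1)⋯(n-u+1)` and `b u = m(m-1)⋯(m-u+1)` with `n ≤ m`, the ratio `b u / a u`
increases with `u`: for `u ≤ v`, `n.descFactorial v = (n - u).descFactorial (v - u) * a u`, and the
first factor increases with `n`. The cross difference `(∑ ψ b)(∑ φ a) - (∑ ψ a)(∑ φ b)` is, by
symmetrization (the Cauchy–Binet formula), half the sum over all `u, v` of
`(ψ u φ v - ψ v φ u)(b u a v - b v a u)`, whose factors have the same sign as soon as `ψ / φ` and
`b / a` are both increasing.
-/

/-- The division-free form of "`b / a` is increasing" for `a > 0`, in probability the monotone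
likelihood ratio order. It also makes sense when `a` vanishes, as descending factorials do. -/
def RatioMonotone {ι R : Type*} [LE ι] [Mul R] [LE R] (a b : ι → R) : Prop :=
  ∀ ⦃u v⦄, u ≤ v → b u * a v ≤ b v * a u

theorem ratioMonotone_iff_monotone_div {ι 𝕜 : Type*} [Preorder ι] [Field 𝕜] [LinearOrder 𝕜]
    [IsStrictOrderedRing 𝕜] {a b : ι → 𝕜} (ha : ∀ u, 0 < a u) :
    RatioMonotone a b ↔ Monotone fun u => b u / a u :=
  forall₃_congr fun u v _ => (div_le_div_iff₀ (ha u) (ha v)).symm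

namespace RatioMonotone

theorem natCast {ι R : Type*} [LE ι] [Semiring R] [PartialOrder R] [IsOrderedRing R]
    {a b : ι → ℕ} (h : RatioMonotone a b) :
    RatioMonotone (fun u => (a u : R)) fun u => (b u : R) :=
  fun u v huv => by simpa only [Nat.cast_mul] using Nat.mono_cast (α := R) (h huv)

theorem mul_cross_sub_nonneg {ι R : Type*} [LinearOrder ι] [Ring R] [PartialOrder R]
    [IsOrderedRing R] {φ ψ a b : ι → R} (h : RatioMonotone φ ψ) (hab : RatioMonotone a b)
    (u v : ι) :
    0 ≤ (ψ u * φ v - ψ v * φ u) * (b u * a v - b v * a u) := by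
  rcases le_total u v with huv | hvu
  · exact mul_nonneg_of_nonpos_of_nonpos (sub_nonpos.2 (h huv)) (sub_nonpos.2 (hab huv))
  · exact mul_nonneg (sub_nonneg.2 (h hvu)) (sub_nonneg.2 (hab hvu))

theorem sum_mul_sum_le_sum_mul_sum {ι R : Type*} [LinearOrder ι] [CommRing R] [LinearOrder R]
    [IsOrderedRing R] {φ ψ a b : ι → R} (h : RatioMonotone φ ψ) (hab : RatioMonotone a b)
    (s : Finset ι) :
    (∑ u ∈ s, ψ u * a u) * ∑ u ∈ s, φ u * b u ≤ (∑ u ∈ s, ψ u * b u) * ∑ u ∈ s, φ u * a u := by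
  let D : ι → ι → R := fun u v => ψ u * b u * (φ v * a v) - ψ u * a u * (φ v * b v)
  have cross_difference : (∑ u ∈ s, ψ u * b u) * ∑ u ∈ s, φ u * a u -
      (∑ u ∈ s, ψ u * a u) * ∑ u ∈ s, φ u * b u = ∑ u ∈ s, ∑ v ∈ s, D u v := by
    simp only [D, Finset.sum_mul_sum, Finset.sum_sub_distrib]
  have symmetrized : 0 ≤ ∑ u ∈ s, ∑ v ∈ s, (D u v + D v u) := by
    refine Finset.sum_nonneg fun u _ => Finset.sum_nonneg fun v _ => ?_
    calc 0 ≤ (ψ u * φ v - ψ v * φ u) * (b u * a v - b v * a u) := h.mul_cross_sub_nonneg hab u v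
      _ = D u v + D v u := by ring
  have swap : ∑ u ∈ s, ∑ v ∈ s, D v u = ∑ u ∈ s, ∑ v ∈ s, D u v := Finset.sum_comm
  simp only [Finset.sum_add_distrib, swap] at symmetrized
  rwa [← sub_nonneg, cross_difference, ← nonneg_add_self_iff]

theorem sum_div_sum_le_sum_div_sum {ι 𝕜 : Type*} [LinearOrder ι] [Field 𝕜] [LinearOrder 𝕜]
    [IsStrictOrderedRing 𝕜] {φ ψ a b : ι → 𝕜} {s : Finset ι}
    (h : RatioMonotone φ ψ) (hab : RatioMonotone a b)
    (ha : 0 < ∑ u ∈ s, φ u * a u) (hb : 0 < ∑ u ∈ s, φ u * b u) :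
    (∑ u ∈ s, ψ u * a u) / ∑ u ∈ s, φ u * a u ≤ (∑ u ∈ s, ψ u * b u) / ∑ u ∈ s, φ u * b u :=
  (div_le_div_iff₀ ha hb).2 (h.sum_mul_sum_le_sum_mul_sum hab s)

end RatioMonotone

theorem ratioMonotone_descFactorial {n m : ℕ} (hnm : n ≤ m) :
    RatioMonotone n.descFactorial m.descFactorial := by
  intro u v huv
  calc m.descFactorial u * n.descFactorial v
      = (n - u).descFactorial (v - u) * (m.descFactorial u * n.descFactorial u) := by
        rw [← Nat.descFactorial_mul_descFactorial huv, mul_left_comm]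
    _ ≤ (m - u).descFactorial (v - u) * (m.descFactorial u * n.descFactorial u) :=
        Nat.mul_le_mul_right _ (Nat.descFactorial_le _ (Nat.sub_le_sub_right hnm u))
    _ = m.descFactorial v * n.descFactorial u := by
        rw [← mul_assoc, Nat.descFactorial_mul_descFactorial huv]

theorem sum_range_mul_descFactorial_eq_of_le {R : Type*} [Semiring R] (f : ℕ → R) {n m : ℕ}
    (hnm : n ≤ m) :
    ∑ u ∈ Finset.range (n + 1), f u * (n.descFactorial u : R) =
      ∑ u ∈ Finset.range (m + 1), f u * (n.descFactorial u : R) := by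
  refine (Finset.eventually_constant_sum (fun u hu => ?_) (Nat.succ_le_succ hnm)).symm
  rw [Nat.descFactorial_of_lt hu, Nat.cast_zero, mul_zero]

theorem sum_range_mul_descFactorial_pos {R : Type*} [Semiring R] [PartialOrder R]
    [IsStrictOrderedRing R] {φ : ℕ → R} (hφ₀ : 0 < φ 0) (hφ : ∀ u, 0 ≤ φ u) (n N : ℕ) :
    0 < ∑ u ∈ Finset.range (N + 1), φ u * (n.descFactorial u : R) :=
  Finset.sum_pos' (fun u _ => mul_nonneg (hφ u) (Nat.cast_nonneg _))
    ⟨0, Finset.mem_range.2 N.succ_pos, by simpa using hφ₀⟩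

theorem quotient_generalized_monomial_series_monotone_general {𝕜 : Type*} [Field 𝕜]
    [LinearOrder 𝕜] [IsStrictOrderedRing 𝕜] {ψ φ : ℕ → 𝕜} (hφ₀ : 0 < φ 0) (hφ : ∀ u, 0 ≤ φ u)
    (hratio : RatioMonotone φ ψ) :
    Monotone fun n : ℕ =>
      (∑ u ∈ Finset.range (n + 1), ψ u * (Nat.descFactorial n u : 𝕜)) /
        (∑ u ∈ Finset.range (n + 1), φ u * (Nat.descFactorial n u : 𝕜)) := by
  intro n m hnm
  simp only [sum_range_mul_descFactorial_eq_of_le _ hnm]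
  exact hratio.sum_div_sum_le_sum_div_sum (ratioMonotone_descFactorial hnm).natCast
    (sum_range_mul_descFactorial_pos hφ₀ hφ n m) (sum_range_mul_descFactorial_pos hφ₀ hφ m m)

theorem quotient_generalized_monomial_series_monotone
    (ψ φ : ℕ → ℝ) (hφpos : ∀ u, 0 < φ u)
    (hratio : Monotone fun u => ψ u / φ u) :
    Monotone fun n : ℕ =>
      (∑ u ∈ Finset.range (n + 1), ψ u * (Nat.descFactorial n u : ℝ)) /
        (∑ u ∈ Finset.range (n + 1), φ u * (Nat.descFactorial n u : ℝ)) :=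
  quotient_generalized_monomial_series_monotone_general (hφpos 0) (fun u => (hφpos u).le)
    ((ratioMonotone_iff_monotone_div hφpos).2 hratio)
end

section
/- Let α < β be real numbers, let I ⊆ ℝ be a nontrivial interval, and let Ψ, Φ : I × [α,β] → (0,∞) be continuous functions whose partial derivatives ∂Ψ/∂s and ∂Φ/∂s exist and are continuous on I × [α,β]. Let T : I → (0,∞) be differentiable and decreasing. Suppose that for all (s,υ) ∈ I × [α,β]: Ψ(s,υ) ≥ Φ(s,υ) and (∂Ψ/∂s)(s,υ) ≥ (∂Φ/∂s)(s,υ), and that for every s ∈ I: (∫_α^β (∂Ψ/∂s)(s,υ) dυ)·(∫_α^β Φ(s,υ) dυ) − (∫_α^β Ψ(s,υ) dυ)·(∫_α^β (∂Φ/∂s)(s,υ) dυ) ≥ 0. Then the function s ↦ (T(s) + ∫_α^β Ψ(s,υ) dυ) / (T(s) + ∫_α^β Φ(s,υ) dυ) is increasing on I. -/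
open MeasureTheory Set intervalIntegral

/-!
Write `A s = ∫ Ψ s` and `B s = ∫ Φ s`. Since
`(T + A) / (T + B) = 1 + (A - B) / (T + B)`, comparing the values at `s ≤ t` amounts to
`(A s - B s) * (T t + B t) ≤ (A t - B t) * (T s + B s)`. The `T`-part holds because `A - B` is
nonnegative and increasing while `T` is decreasing, and the `B`-part because `A / B` is increasing.
That they are increasing follows by differentiating `A` and `B` under the integral sign.
-/

open scoped Topology

theorem monotoneOn_add_div_add {ι 𝕜 : Type*} [Preorder ι] [Field 𝕜] [LinearOrder 𝕜]
    [IsStrictOrderedRing 𝕜] {S : Set ι} {T A B : ι → 𝕜} (hT : AntitoneOn T S)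
    (hT_nonneg : ∀ s ∈ S, 0 ≤ T s) (hB_pos : ∀ s ∈ S, 0 < B s) (hBA : ∀ s ∈ S, B s ≤ A s)
    (hsub : MonotoneOn (fun s => A s - B s) S) (hdiv : MonotoneOn (fun s => A s / B s) S) :
    MonotoneOn (fun s => (T s + A s) / (T s + B s)) S := by
  intro s hs t ht hst
  have hTpart : (A s - B s) * T t ≤ (A t - B t) * T s :=
    mul_le_mul (hsub hs ht hst) (hT hs ht hst) (hT_nonneg t ht) (sub_nonneg.2 (hBA t ht))
  have hBpart : A s * B t ≤ A t * B s :=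
    (div_le_div_iff₀ (hB_pos s hs) (hB_pos t ht)).1 (hdiv hs ht hst)
  refine (div_le_div_iff₀ (add_pos_of_nonneg_of_pos (hT_nonneg s hs) (hB_pos s hs))
    (add_pos_of_nonneg_of_pos (hT_nonneg t ht) (hB_pos t ht))).2 ?_
  linear_combination hTpart + hBpart

section RealDerivative

variable {I : Set ℝ} {A B A' B' : ℝ → ℝ}

theorem monotoneOn_of_forall_hasDerivWithinAt_nonneg (hI : Convex ℝ I)
    (hA : ∀ s ∈ I, HasDerivWithinAt A (A' s) I s) (hA' : ∀ s ∈ I, 0 ≤ A' s) : MonotoneOn A I :=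
  monotoneOn_of_hasDerivWithinAt_nonneg hI (fun s hs => (hA s hs).continuousWithinAt)
    (fun s hs => (hA s (interior_subset hs)).mono interior_subset)
    (fun s hs => hA' s (interior_subset hs))

theorem monotoneOn_sub_of_hasDerivWithinAt_le (hI : Convex ℝ I)
    (hA : ∀ s ∈ I, HasDerivWithinAt A (A' s) I s) (hB : ∀ s ∈ I, HasDerivWithinAt B (B' s) I s)
    (hle : ∀ s ∈ I, B' s ≤ A' s) : MonotoneOn (fun s => A s - B s) I :=
  monotoneOn_of_forall_hasDerivWithinAt_nonneg hI (fun s hs => (hA s hs).fun_sub (hB s hs))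
    fun s hs => sub_nonneg.2 (hle s hs)

theorem monotoneOn_div_of_hasDerivWithinAt (hI : Convex ℝ I)
    (hA : ∀ s ∈ I, HasDerivWithinAt A (A' s) I s) (hB : ∀ s ∈ I, HasDerivWithinAt B (B' s) I s)
    (hB_ne : ∀ s ∈ I, B s ≠ 0) (hwronskian : ∀ s ∈ I, 0 ≤ A' s * B s - A s * B' s) :
    MonotoneOn (fun s => A s / B s) I :=
  monotoneOn_of_forall_hasDerivWithinAt_nonneg hI
    (fun s hs => (hA s hs).fun_div (hB s hs) (hB_ne s hs))
    fun s hs => div_nonneg (hwronskian s hs) (sq_nonneg _)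

end RealDerivative

section DerivativeUnderIntegral

variable {𝕜 E Y : Type*} [RCLike 𝕜] [NormedAddCommGroup E] [NormedSpace 𝕜 E]
  [TopologicalSpace Y] {I : Set 𝕜} {K : Set Y} {F F' : 𝕜 → Y → E}

theorem eventually_forall_norm_sub_sub_smul_le_of_isCompact (hI : Convex ℝ I) (hK : IsCompact K)
    (hF' : ContinuousOn F'.uncurry (I ×ˢ K))
    (hderiv : ∀ s ∈ I, ∀ y ∈ K, HasDerivWithinAt (F · y) (F' s y) I s)
    {s : 𝕜} (hs : s ∈ I) {ε : ℝ} (hε : 0 < ε) :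
    ∀ᶠ t in 𝓝[I] s, ∀ y ∈ K, ‖F t y - F s y - (t - s) • F' s y‖ ≤ ε * ‖t - s‖ := by
  obtain ⟨v, hv, hF'_close⟩ := hK.mem_uniformity_of_prod hF' hs (Metric.dist_mem_uniformity hε)
  obtain ⟨r, hr, hball⟩ := Metric.mem_nhdsWithin_iff.1 hv
  have hs_mem : s ∈ Metric.ball s r ∩ I := ⟨Metric.mem_ball_self hr, hs⟩
  filter_upwards [mem_nhdsWithin_of_mem_nhds (Metric.ball_mem_nhds s hr),
    self_mem_nhdsWithin] with t ht_ball ht_I y hy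
  have hremainder : ∀ x ∈ Metric.ball s r ∩ I, HasDerivWithinAt
      (fun x => F x y - x • F' s y) (F' x y - F' s y) (Metric.ball s r ∩ I) x := fun x hx => by
    simpa using ((hderiv x hx.2 y hy).mono inter_subset_right).fun_sub
      ((hasDerivWithinAt_id x _).smul_const (F' s y))
  have hbound : ∀ x ∈ Metric.ball s r ∩ I, ‖F' x y - F' s y‖ ≤ ε := fun x hx =>
    (dist_eq_norm (F' x y) _).symm.trans_le (hF'_close x (hball hx) y hy).le
  calc ‖F t y - F s y - (t - s) • F' s y‖
      = ‖(F t y - t • F' s y) - (F s y - s • F' s y)‖ := by congr 1; module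
    _ ≤ ε * ‖t - s‖ := Convex.norm_image_sub_le_of_norm_hasDerivWithin_le hremainder hbound
        ((convex_ball s r).inter hI) hs_mem ⟨ht_ball, ht_I⟩

variable [NormedSpace ℝ E] [MeasurableSpace Y] [OpensMeasurableSpace Y] {μ : Measure Y}
  [IsFiniteMeasureOnCompacts μ]

theorem hasDerivWithinAt_setIntegral_of_isCompact (hI : Convex ℝ I) (hK : IsCompact K)
    (hK_meas : MeasurableSet K) (hF : ∀ s ∈ I, IntegrableOn (F s) K μ)
    (hF' : ContinuousOn F'.uncurry (I ×ˢ K))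
    (hderiv : ∀ s ∈ I, ∀ y ∈ K, HasDerivWithinAt (F · y) (F' s y) I s)
    {s : 𝕜} (hs : s ∈ I) :
    HasDerivWithinAt (fun t => ∫ y in K, F t y ∂μ) (∫ y in K, F' s y ∂μ) I s := by
  have hF's_int : IntegrableOn (F' s) K μ :=
    (hF'.uncurry_left s hs).integrableOn_compact' hK hK_meas
  refine .of_isLittleO (Asymptotics.isLittleO_iff.2 fun c hc => ?_)
  have hmass : 0 < μ.real K + 1 := by positivity
  filter_upwards [self_mem_nhdsWithin, eventually_forall_norm_sub_sub_smul_le_of_isCompact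
    hI hK hF' hderiv hs (div_pos hc hmass)] with t ht hexpansion
  calc ‖∫ y in K, F t y ∂μ - ∫ y in K, F s y ∂μ - (t - s) • ∫ y in K, F' s y ∂μ‖
      = ‖∫ y in K, (F t y - F s y - (t - s) • F' s y) ∂μ‖ := by
        rw [integral_sub ((hF t ht).fun_sub (hF s hs)) (hF's_int.fun_smul (t - s)),
          integral_sub (hF t ht) (hF s hs), MeasureTheory.integral_smul]
    _ ≤ c / (μ.real K + 1) * ‖t - s‖ * μ.real K :=
        norm_setIntegral_le_of_norm_le_const hK.measure_lt_top hexpansion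
    _ ≤ c / (μ.real K + 1) * ‖t - s‖ * (μ.real K + 1) := by gcongr; linarith
    _ = c * ‖t - s‖ := by field_simp

end DerivativeUnderIntegral

theorem setIntegral_pos_of_forall_pos_s19 {X : Type*} [MeasurableSpace X] {μ : Measure X} {K : Set X}
    {f : X → ℝ} (hK : MeasurableSet K) (hμK : μ K ≠ 0) (hf : IntegrableOn f K μ)
    (hf_pos : ∀ x ∈ K, 0 < f x) : 0 < ∫ x in K, f x ∂μ := by
  have hsupport : K ⊆ Function.support f := fun x hx => (hf_pos x hx).ne'
  rw [setIntegral_pos_iff_support_of_nonneg_ae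
    (ae_restrict_of_forall_mem hK fun x hx => (hf_pos x hx).le) hf,
    inter_eq_right.2 hsupport]
  exact pos_iff_ne_zero.2 hμK

theorem quotient_T_plus_parameter_integral_monotone_general
    {Y : Type*} [TopologicalSpace Y] [MeasurableSpace Y] [OpensMeasurableSpace Y]
    {μ : Measure Y} [IsFiniteMeasureOnCompacts μ] {K : Set Y} (hK : IsCompact K)
    (hK_meas : MeasurableSet K) (hμK : μ K ≠ 0) {I : Set ℝ} (hI : Convex ℝ I)
    {Ψ Φ Ψs Φs : ℝ → Y → ℝ} {T : ℝ → ℝ} (hΦ_pos : ∀ s ∈ I, ∀ y ∈ K, 0 < Φ s y)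
    (hΨ_int : ∀ s ∈ I, IntegrableOn (Ψ s) K μ) (hΦ_int : ∀ s ∈ I, IntegrableOn (Φ s) K μ)
    (hΨ_deriv : ∀ s ∈ I, ∀ y ∈ K, HasDerivWithinAt (Ψ · y) (Ψs s y) I s)
    (hΦ_deriv : ∀ s ∈ I, ∀ y ∈ K, HasDerivWithinAt (Φ · y) (Φs s y) I s)
    (hΨs : ContinuousOn Ψs.uncurry (I ×ˢ K)) (hΦs : ContinuousOn Φs.uncurry (I ×ˢ K))
    (hT_nonneg : ∀ s ∈ I, 0 ≤ T s) (hT : AntitoneOn T I)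
    (hdom : ∀ s ∈ I, ∀ y ∈ K, Φ s y ≤ Ψ s y) (hdom_deriv : ∀ s ∈ I, ∀ y ∈ K, Φs s y ≤ Ψs s y)
    (hwronskian : ∀ s ∈ I, 0 ≤ (∫ y in K, Ψs s y ∂μ) * (∫ y in K, Φ s y ∂μ) -
      (∫ y in K, Ψ s y ∂μ) * (∫ y in K, Φs s y ∂μ)) :
    MonotoneOn (fun s => (T s + ∫ y in K, Ψ s y ∂μ) / (T s + ∫ y in K, Φ s y ∂μ)) I := by
  have hA := fun s (hs : s ∈ I) =>
    hasDerivWithinAt_setIntegral_of_isCompact hI hK hK_meas hΨ_int hΨs hΨ_deriv hs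
  have hB := fun s (hs : s ∈ I) =>
    hasDerivWithinAt_setIntegral_of_isCompact hI hK hK_meas hΦ_int hΦs hΦ_deriv hs
  have hB_pos : ∀ s ∈ I, 0 < ∫ y in K, Φ s y ∂μ := fun s hs =>
    setIntegral_pos_of_forall_pos_s19 hK_meas hμK (hΦ_int s hs) (hΦ_pos s hs)
  have hBA : ∀ s ∈ I, ∫ y in K, Φ s y ∂μ ≤ ∫ y in K, Ψ s y ∂μ := fun s hs =>
    setIntegral_mono_on (hΦ_int s hs) (hΨ_int s hs) hK_meas (hdom s hs)
  have hBA_deriv : ∀ s ∈ I, ∫ y in K, Φs s y ∂μ ≤ ∫ y in K, Ψs s y ∂μ := fun s hs =>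
    setIntegral_mono_on ((hΦs.uncurry_left s hs).integrableOn_compact' hK hK_meas)
      ((hΨs.uncurry_left s hs).integrableOn_compact' hK hK_meas) hK_meas (hdom_deriv s hs)
  exact monotoneOn_add_div_add hT hT_nonneg hB_pos hBA
    (monotoneOn_sub_of_hasDerivWithinAt_le hI hA hB hBA_deriv)
    (monotoneOn_div_of_hasDerivWithinAt hI hA hB (fun s hs => (hB_pos s hs).ne') hwronskian)

theorem quotient_T_plus_parameter_integral_monotone
    (α β : ℝ) (hαβ : α < β) (I : Set ℝ) (hIconn : I.OrdConnected)
    (hInt : I.Nontrivial)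
    (Ψ Φ Ψs Φs : ℝ → ℝ → ℝ) (T : ℝ → ℝ)
    (hΨpos : ∀ s ∈ I, ∀ υ ∈ Icc α β, 0 < Ψ s υ)
    (hΦpos : ∀ s ∈ I, ∀ υ ∈ Icc α β, 0 < Φ s υ)
    (hΨc : ContinuousOn (fun p : ℝ × ℝ => Ψ p.1 p.2) (I ×ˢ Icc α β))
    (hΦc : ContinuousOn (fun p : ℝ × ℝ => Φ p.1 p.2) (I ×ˢ Icc α β))
    (hΨderiv : ∀ s ∈ I, ∀ υ ∈ Icc α β, HasDerivWithinAt (fun t => Ψ t υ) (Ψs s υ) I s)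
    (hΦderiv : ∀ s ∈ I, ∀ υ ∈ Icc α β, HasDerivWithinAt (fun t => Φ t υ) (Φs s υ) I s)
    (hΨsc : ContinuousOn (fun p : ℝ × ℝ => Ψs p.1 p.2) (I ×ˢ Icc α β))
    (hΦsc : ContinuousOn (fun p : ℝ × ℝ => Φs p.1 p.2) (I ×ˢ Icc α β))
    (hTpos : ∀ s ∈ I, 0 < T s)
    (hTdiff : DifferentiableOn ℝ T I)
    (hTdec : AntitoneOn T I)
    (hdom : ∀ s ∈ I, ∀ υ ∈ Icc α β, Φ s υ ≤ Ψ s υ)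
    (hdomderiv : ∀ s ∈ I, ∀ υ ∈ Icc α β, Φs s υ ≤ Ψs s υ)
    (hkey : ∀ s ∈ I,
      0 ≤ (∫ υ in α..β, Ψs s υ) * (∫ υ in α..β, Φ s υ) -
        (∫ υ in α..β, Ψ s υ) * (∫ υ in α..β, Φs s υ)) :
    MonotoneOn
      (fun s => (T s + ∫ υ in α..β, Ψ s υ) / (T s + ∫ υ in α..β, Φ s υ)) I := by
  simp only [integral_of_le hαβ.le, ← integral_Icc_eq_integral_Ioc] at hkey ⊢
  exact quotient_T_plus_parameter_integral_monotone_general isCompact_Icc measurableSet_Icc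
    (by simpa using hαβ) hIconn.convex hΦpos
    (fun s hs => (ContinuousOn.uncurry_left s hs hΨc).integrableOn_Icc)
    (fun s hs => (ContinuousOn.uncurry_left s hs hΦc).integrableOn_Icc)
    hΨderiv hΦderiv hΨsc hΦsc (fun s hs => (hTpos s hs).le) hTdec hdom hdomderiv hkey
end
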